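/- arXiv:2603.03863 — 11 statements merged into one kernel-verified Lean document; each statement's English description precedes it below -/
import Mathlib

section
/- Let Γ be a group generated by a finite symmetric subset S containing the identity, and let μ > 0. Then the set 𝓑(S;μ) = {F ∈ 𝓕(Γ) : F(s) ≤ cosh μ for all s ∈ S} is a compact subset of ℝ^Γ for the product topology, and moreover for every function of hyperbolic type F on Γ there exists t ∈ (0,1] such that the pointwise power F^t belongs to 𝓑(S;μ). -/
/-- A kernel of hyperbolic type on a set `X`: symmetric, nonnegative, with diagonal `1`,
satisfying the hyperbolic Cauchy–Schwarz inequalities. -/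
def IsHypKernel {X : Type*} (K : X → X → ℝ) : Prop :=
  (∀ x y, K x y = K y x) ∧ (∀ x y, 0 ≤ K x y) ∧ (∀ x, K x x = 1) ∧
  ∀ (n : ℕ) (x₀ : X) (x : Fin n → X) (lam : Fin n → ℝ),
    (∑ i, ∑ j, lam i * lam j * K (x i) (x j)) ≤ (∑ k, lam k * K x₀ (x k)) ^ 2

/-- A function of hyperbolic type on a group `Γ`. -/
def IsHypType {Γ : Type*} [Group Γ] (F : Γ → ℝ) : Prop :=
  IsHypKernel (fun α β : Γ => F (α⁻¹ * β))

lemma hyp_one_le {X : Type*} {K : X → X → ℝ} (h : IsHypKernel K) (x y : X) : 1 ≤ K x y := by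
  obtain ⟨hs, h0, h1, hc⟩ := h
  have := hc 1 x (fun _ => y) (fun _ => 1)
  simp [h1] at this
  rwa [abs_of_nonneg (h0 x y)] at this

lemma hyp_lt {X : Type*} {K : X → X → ℝ} (h : IsHypKernel K) (x₀ x y : X) :
    K x y < 2 * (K x₀ x * K x₀ y) := by
  have hx := hyp_one_le h x₀ x
  have hy := hyp_one_le h x₀ y
  obtain ⟨hs, h0, h1, hc⟩ := h
  have := hc 2 x₀ ![x, y] ![K x₀ y, K x₀ x]
  simp [Fin.sum_univ_two, h1, hs y x] at this
  have hp : 0 < K x₀ x * K x₀ y := by positivity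
  have : (K x₀ x * K x₀ y) * K x y < (K x₀ x * K x₀ y) * (2 * (K x₀ x * K x₀ y)) := by
    nlinarith
  exact lt_of_mul_lt_mul_left this hp.le

/-- Newton-type iteration for `1 - √(1 - x)`. -/
noncomputable def hypIter (x : ℝ) : ℕ → ℝ
  | 0 => 0
  | k + 1 => (1 / 2) * (x + hypIter x k * hypIter x k)

lemma hypIter_tendsto (x : ℝ) (hx : |x| < 1) :
    Filter.Tendsto (hypIter x) Filter.atTop (nhds (1 - Real.sqrt (1 - x))) := by
  obtain ⟨hx1, hx2⟩ := abs_lt.1 hx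
  set r := 1 - Real.sqrt (1 - |x|) with hr
  set y := 1 - Real.sqrt (1 - x) with hy
  have hsr : Real.sqrt (1 - |x|) ^ 2 = 1 - |x| := Real.sq_sqrt (by linarith)
  have hsy : Real.sqrt (1 - x) ^ 2 = 1 - x := Real.sq_sqrt (by linarith)
  have hpr : 0 < Real.sqrt (1 - |x|) := Real.sqrt_pos.2 (by linarith)
  have hpy : 0 < Real.sqrt (1 - x) := Real.sqrt_pos.2 (by linarith)
  have hr1 : r < 1 := by linarith
  have hr0 : 0 ≤ r := by
    have : Real.sqrt (1 - |x|) ≤ 1 := Real.sqrt_le_one.2 (by linarith [abs_nonneg x])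
    linarith
  have hrr : (1 / 2) * (|x| + r * r) = r := by rw [hr]; nlinarith
  have hyy : (1 / 2) * (x + y * y) = y := by rw [hy]; nlinarith
  have hb : ∀ k, |hypIter x k| ≤ r := by
    intro k
    induction k with
    | zero => simpa [hypIter] using hr0
    | succ k ih =>
      rw [hypIter, abs_mul, ← hrr]
      have h1 : |x + hypIter x k * hypIter x k| ≤ |x| + |hypIter x k| * |hypIter x k| := by
        rw [← abs_mul]; exact abs_add_le _ _
      have h2 : |hypIter x k| * |hypIter x k| ≤ r * r := by gcongr
      rw [abs_of_pos (by norm_num : (0 : ℝ) < 1 / 2)]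
      linarith
  have hyr : |y| ≤ r := by
    rw [abs_le]
    have h1 : Real.sqrt (1 - |x|) ≤ Real.sqrt (1 - x) :=
      Real.sqrt_le_sqrt (by linarith [le_abs_self x])
    refine ⟨?_, by linarith⟩
    have h3 : 1 - x ≤ 1 + |x| := by linarith [neg_abs_le x]
    have : Real.sqrt (1 - x) + Real.sqrt (1 - |x|) ≤ 2 := by
      nlinarith [sq_nonneg (Real.sqrt (1 - x) - Real.sqrt (1 - |x|))]
    linarith
  have hd : ∀ k, |hypIter x k - y| ≤ r ^ k * |y| := by
    intro k
    induction k with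
    | zero => simp [hypIter]
    | succ k ih =>
      have : hypIter x (k + 1) - y = (hypIter x k - y) * ((1 / 2) * (hypIter x k + y)) := by
        rw [hypIter]; linear_combination hyy
      rw [this, abs_mul, pow_succ]
      have h2 : |(1 / 2) * (hypIter x k + y)| ≤ r := by
        rw [abs_mul, abs_of_pos (by norm_num : (0 : ℝ) < 1 / 2)]
        linarith [abs_add_le (hypIter x k) y, hb k]
      calc _ ≤ (r ^ k * |y|) * r := by gcongr
        _ = _ := by ring
  rw [tendsto_iff_dist_tendsto_zero]
  refine squeeze_zero (fun _ => dist_nonneg) 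
    (fun k => (Real.dist_eq _ _).trans_le (hd k)) ?_
  simpa using (tendsto_pow_atTop_nhds_zero_of_lt_one hr0 hr1).mul_const |y|

lemma hypIter_posSemidef {n : ℕ} (N : Matrix (Fin n) (Fin n) ℝ) (hN : N.PosSemidef) (k : ℕ) :
    (Matrix.of fun i j => hypIter (N i j) k).PosSemidef := by
  induction k with
  | zero => exact Matrix.PosSemidef.zero
  | succ k ih =>
    have := (hN.add (ih.hadamard ih)).smul (by norm_num : (0 : ℝ) ≤ 1 / 2)
    convert this using 1
    ext i j
    simp [hypIter]

lemma quad_eq {n : ℕ} (N : Matrix (Fin n) (Fin n) ℝ) (v : Fin n → ℝ) :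
    star v ⬝ᵥ (N.mulVec v) = ∑ i, ∑ j, v i * v j * N i j := by
  simp only [dotProduct, Matrix.mulVec, Finset.mul_sum]
  refine Finset.sum_congr rfl fun i _ => Finset.sum_congr rfl fun j _ => ?_
  simp; ring

lemma hyp_sqrt {X : Type*} {K : X → X → ℝ} (h : IsHypKernel K) :
    IsHypKernel (fun x y => Real.sqrt (K x y)) := by
  have h1le := hyp_one_le h
  have hlt := hyp_lt h
  obtain ⟨hs, h0, h1, hc⟩ := h
  refine ⟨fun x y => by simp only [hs x y], fun x y => Real.sqrt_nonneg _,
    fun x => by simp [h1], ?_⟩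
  intro n x₀ x lam
  set f : Fin n → ℝ := fun i => K x₀ (x i) with hf
  have hfp : ∀ i, 0 < f i := fun i => lt_of_lt_of_le one_pos (h1le _ _)
  set N : Matrix (Fin n) (Fin n) ℝ := Matrix.of fun i j => 1 - K (x i) (x j) / (f i * f j) with hN
  have hNabs : ∀ i j, |N i j| < 1 := by
    intro i j
    have hp : 0 < f i * f j := mul_pos (hfp i) (hfp j)
    have a : 0 < K (x i) (x j) / (f i * f j) :=
      div_pos (lt_of_lt_of_le one_pos (h1le _ _)) hp
    have b : K (x i) (x j) / (f i * f j) < 2 := (div_lt_iff₀ hp).2 (hlt _ _ _)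
    rw [abs_lt]
    constructor <;> simp only [hN, Matrix.of_apply] <;> linarith
  have hNpsd : N.PosSemidef := by
    refine Matrix.PosSemidef.of_dotProduct_mulVec_nonneg ?_ ?_
    · ext i j
      simp [hN, hs (x j) (x i), mul_comm (f j)]
    · intro v
      rw [quad_eq]
      have := hc n x₀ x (fun i => v i / f i)
      have e1 : ∑ k, v k / f k * K x₀ (x k) = ∑ k, v k :=
        Finset.sum_congr rfl fun k _ => div_mul_cancel₀ _ (hfp k).ne'
      rw [e1, pow_two, Finset.sum_mul_sum] at this
      rw [← sub_nonneg, ← Finset.sum_sub_distrib] at this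
      refine this.trans_eq (Finset.sum_congr rfl fun i _ => ?_)
      rw [← Finset.sum_sub_distrib]
      refine Finset.sum_congr rfl fun j _ => ?_
      have := (hfp i).ne'
      have := (hfp j).ne'
      simp only [hN, Matrix.of_apply]
      field_simp
  have key : 0 ≤ ∑ i, ∑ j, (lam i * Real.sqrt (f i)) * (lam j * Real.sqrt (f j)) *
      (1 - Real.sqrt (1 - N i j)) := by
    refine ge_of_tendsto' (f := fun k => ∑ i, ∑ j, (lam i * Real.sqrt (f i)) *
      (lam j * Real.sqrt (f j)) * hypIter (N i j) k) (x := Filter.atTop) ?_ ?_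
    · exact tendsto_finsetSum _ fun i _ => tendsto_finsetSum _ fun j _ =>
        (hypIter_tendsto _ (hNabs i j)).const_mul _
    · intro k
      have := (hypIter_posSemidef N hNpsd k).dotProduct_mulVec_nonneg
        (fun i => lam i * Real.sqrt (f i))
      rw [quad_eq] at this
      exact this
  rw [pow_two, Finset.sum_mul_sum, ← sub_nonneg, ← Finset.sum_sub_distrib]
  refine key.trans_eq (Finset.sum_congr rfl fun i _ => ?_)
  rw [← Finset.sum_sub_distrib]
  refine Finset.sum_congr rfl fun j _ => ?_
  have e : Real.sqrt (1 - N i j) = Real.sqrt (K (x i) (x j)) / (Real.sqrt (f i) * Real.sqrt (f j)) := by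
    simp only [hN, Matrix.of_apply, sub_sub_cancel]
    rw [Real.sqrt_div (h0 _ _), Real.sqrt_mul (hfp i).le]
  rw [e]
  have := (Real.sqrt_pos.2 (hfp i)).ne'
  have := (Real.sqrt_pos.2 (hfp j)).ne'
  change _ = lam i * Real.sqrt (f i) * (lam j * Real.sqrt (f j)) - _
  field_simp

lemma hypType_pow {Γ : Type*} [Group Γ] {F : Γ → ℝ} (hF : IsHypType F) (m : ℕ) :
    IsHypType (fun γ => F γ ^ ((1 / 2 : ℝ) ^ m)) := by
  induction m with
  | zero => simpa using hF
  | succ m ih =>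
    have := hyp_sqrt ih
    have e : (fun γ => F γ ^ ((1 / 2 : ℝ) ^ (m + 1))) =
        fun γ => Real.sqrt (F γ ^ ((1 / 2 : ℝ) ^ m)) := by
      funext γ
      have h0 : 0 ≤ F γ := by simpa using hF.2.1 1 γ
      rw [Real.sqrt_eq_rpow, ← Real.rpow_mul h0, pow_succ]
    rw [e]
    exact this

lemma hypType_bound {Γ : Type*} [Group Γ] (S : Set Γ) (hSgen : Subgroup.closure S = ⊤)
    (c : ℝ) (γ : Γ) :
    ∃ C : ℝ, ∀ F : Γ → ℝ, IsHypType F → (∀ s ∈ S, F s ≤ c) → F γ ≤ C := by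
  have hsymm : ∀ F : Γ → ℝ, IsHypType F → ∀ g, F g⁻¹ = F g := by
    intro F hF g
    simpa using hF.1 g 1
  have hγ : γ ∈ Subgroup.closure S := hSgen ▸ Subgroup.mem_top γ
  induction hγ using Subgroup.closure_induction with
  | mem x hx => exact ⟨c, fun F _ h => h x hx⟩
  | one => exact ⟨1, fun F hF _ => by have := hF.2.2.1 1; simp at this; exact this.le⟩
  | mul x y _ _ hx hy =>
    obtain ⟨A, hA⟩ := hx
    obtain ⟨B, hB⟩ := hy
    refine ⟨2 * (A * B), fun F hF h => ?_⟩
    have h1 := hyp_lt hF 1 x⁻¹ y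
    have h2 := hyp_one_le hF 1 x
    have h3 := hyp_one_le hF 1 y
    simp [hsymm F hF x] at h1 h2 h3
    have := mul_le_mul (hA F hF h) (hB F hF h) (by linarith) (by linarith [hA F hF h])
    linarith
  | inv x _ hx =>
    obtain ⟨A, hA⟩ := hx
    exact ⟨A, fun F hF h => by rw [hsymm F hF x]; exact hA F hF h⟩

lemma isClosed_hypType {Γ : Type*} [Group Γ] : IsClosed {F : Γ → ℝ | IsHypType F} := by
  unfold IsHypType IsHypKernel
  simp only [Set.ofPred_and, Set.ofPred_forall]
  refine IsClosed.inter ?_ (IsClosed.inter ?_ (IsClosed.inter ?_ ?_))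
  · exact isClosed_iInter fun x => isClosed_iInter fun y => isClosed_eq (by fun_prop) (by fun_prop)
  · exact isClosed_iInter fun x => isClosed_iInter fun y => isClosed_le (by fun_prop) (by fun_prop)
  · exact isClosed_iInter fun x => isClosed_eq (by fun_prop) (by fun_prop)
  · exact isClosed_iInter fun n => isClosed_iInter fun x => isClosed_iInter fun y =>
      isClosed_iInter fun l => isClosed_le (by fun_prop) (by fun_prop)

/-- Let `Γ` be generated by a finite symmetric set `S` containing `1`, and `μ > 0`.  Then
`𝓑(S;μ) = {F ∈ 𝓕(Γ) : ∀ s ∈ S, F s ≤ cosh μ}` is compact in `ℝ^Γ` (product topology),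
and every function of hyperbolic type `F` has a power `F^t`, `t ∈ (0,1]`, lying in `𝓑(S;μ)`. -/
theorem isCompact_ball_and_power_mem {Γ : Type*} [Group Γ] (S : Finset Γ)
    (hSsym : ∀ s ∈ S, s⁻¹ ∈ S) (hSone : (1 : Γ) ∈ S)
    (hSgen : Subgroup.closure (S : Set Γ) = ⊤) (μ : ℝ) (hμ : 0 < μ) :
    IsCompact {F : Γ → ℝ | IsHypType F ∧ ∀ s ∈ S, F s ≤ Real.cosh μ} ∧
    ∀ F : Γ → ℝ, IsHypType F → ∃ t : ℝ, t ∈ Set.Ioc (0 : ℝ) 1 ∧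
      (fun γ : Γ => F γ ^ t) ∈ {F : Γ → ℝ | IsHypType F ∧ ∀ s ∈ S, F s ≤ Real.cosh μ} := by
  constructor
  · choose C hC using hypType_bound (S : Set Γ) hSgen (Real.cosh μ)
    refine IsCompact.of_isClosed_subset
      (isCompact_univ_pi fun γ : Γ => isCompact_Icc (a := (0 : ℝ)) (b := C γ)) ?_ ?_
    · rw [Set.ofPred_and]
      refine isClosed_hypType.inter ?_
      simp only [Set.ofPred_forall]
      exact isClosed_iInter fun s => isClosed_iInter fun _ =>
        isClosed_le (by fun_prop) (by fun_prop)
    · rintro F ⟨hF, hS⟩ γ -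
      exact ⟨by simpa using hF.2.1 1 γ, hC γ F hF hS⟩
  · intro F hF
    have hlim : ∀ s ∈ S, ∀ᶠ m : ℕ in Filter.atTop, F s ^ ((1 / 2 : ℝ) ^ m) ≤ Real.cosh μ := by
      intro s _
      have h1 : 1 ≤ F s := by simpa using hyp_one_le hF 1 s
      have ht : Filter.Tendsto (fun m : ℕ => F s ^ ((1 / 2 : ℝ) ^ m)) Filter.atTop
          (nhds (F s ^ (0 : ℝ))) :=
        (Real.continuousAt_const_rpow (by linarith)).tendsto.comp
          (tendsto_pow_atTop_nhds_zero_of_lt_one (by norm_num) (by norm_num))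
      rw [Real.rpow_zero] at ht
      exact (ht.eventually_lt_const (Real.one_lt_cosh.2 hμ.ne')).mono fun _ h => h.le
    obtain ⟨m, hm⟩ := ((Finset.eventually_all S).2 hlim).exists
    exact ⟨(1 / 2 : ℝ) ^ m, ⟨by positivity, pow_le_one₀ (by norm_num) (by norm_num)⟩,
      hypType_pow hF m, hm⟩
end

section
/- Let Γ be a group, let S ⊆ Γ be a finite subset with S = S⁻¹ and 1 ∈ S, let F be a function of hyperbolic type on Γ, and let μ ≥ 0 satisfy F(s) ≤ cosh μ for all s ∈ S. Then for every n ≥ 1 and every γ ∈ Γ that can be written as a product of at most n elements of S, one has F(γ) ≤ cosh(4ⁿ·μ). -/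
theorem hypType_triangle_aux {Γ : Type*} [Group Γ] (F : Γ → ℝ) (hF : IsHypType F) (g h : Γ)
    (a b : ℝ) (ha : 0 ≤ a) (hb : 0 ≤ b) (hg : F g ≤ Real.cosh a) (hh : F h ≤ Real.cosh b) :
    F (g * h) ≤ Real.cosh (a + b) := by
  obtain ⟨h1, h2, h3, h4⟩ := hF
  have hinv : F g⁻¹ = F g := by simpa using h1 g 1
  have hone : F 1 = 1 := by simpa using h3 1
  have hsym : F (h⁻¹ * g⁻¹) = F (g * h) := by simpa using h1 h g⁻¹
  have hg0 : 0 ≤ F g := by simpa using h2 1 g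
  have hh0 : 0 ≤ F h := by simpa using h2 1 h
  have key : ∀ s t : ℝ, s ^ 2 + t ^ 2 + 2 * s * t * F (g * h) ≤ (s * F g + t * F h) ^ 2 := by
    intro s t
    have := h4 2 1 ![g⁻¹, h] ![s, t]
    simp [Fin.sum_univ_two, hinv, hone] at this
    rw [← mul_inv_rev] at this
    have e : F (g * h)⁻¹ = F (g * h) := by rw [mul_inv_rev, hsym]
    rw [e] at this
    linarith
  have hd := discrim_le_zero (a := F g ^ 2 - 1) (b := 2 * (F g * F h - F (g * h)))
    (c := F h ^ 2 - 1) (fun t => by have := key t 1; nlinarith)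
  have hA := key 1 0
  have hB := key 0 1
  have ca := Real.cosh_sq a
  have cb := Real.cosh_sq b
  have sa : 0 ≤ Real.sinh a := Real.sinh_nonneg_iff.2 ha
  have sb : 0 ≤ Real.sinh b := Real.sinh_nonneg_iff.2 hb
  have hA2 : F g ^ 2 - 1 ≤ Real.sinh a ^ 2 := by
    have := pow_le_pow_left₀ hg0 hg 2
    linarith
  have hB2 : F h ^ 2 - 1 ≤ Real.sinh b ^ 2 := by
    have := pow_le_pow_left₀ hh0 hh 2
    linarith
  have hm : (F g ^ 2 - 1) * (F h ^ 2 - 1) ≤ Real.sinh a ^ 2 * Real.sinh b ^ 2 :=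
    mul_le_mul hA2 hB2 (by linarith) (sq_nonneg _)
  have hsq : (F (g * h) - F g * F h) ^ 2 ≤ (Real.sinh a * Real.sinh b) ^ 2 := by
    unfold discrim at hd
    nlinarith
  have h5 := abs_le_of_sq_le_sq hsq (mul_nonneg sa sb)
  have h6 : F g * F h ≤ Real.cosh a * Real.cosh b :=
    mul_le_mul hg hh hh0 (Real.cosh_pos a).le
  rw [Real.cosh_add]
  linarith [(abs_le.1 h5).2]

/-- If `F` is of hyperbolic type, `S` is a finite symmetric subset containing `1`, `μ ≥ 0`
and `F(s) ≤ cosh μ` on `S`, then any `γ` which is a product of at most `n ≥ 1` elements of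
`S` satisfies `F(γ) ≤ cosh (4^n μ)`. -/
theorem hypType_growth_bound {Γ : Type*} [Group Γ] (S : Finset Γ)
    (hSsym : ∀ s ∈ S, s⁻¹ ∈ S) (hSone : (1 : Γ) ∈ S)
    (F : Γ → ℝ) (hF : IsHypType F) (μ : ℝ) (hμ : 0 ≤ μ)
    (hbound : ∀ s ∈ S, F s ≤ Real.cosh μ) :
    ∀ n : ℕ, 1 ≤ n → ∀ γ : Γ,
      (∃ l : List Γ, (∀ x ∈ l, x ∈ S) ∧ l.length ≤ n ∧ l.prod = γ) →
      F γ ≤ Real.cosh (4 ^ n * μ) := by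
  rintro n - γ ⟨l, hl, hn, rfl⟩
  have main : ∀ l : List Γ, (∀ x ∈ l, x ∈ S) → F l.prod ≤ Real.cosh (l.length * μ) := by
    intro l
    induction l with
    | nil =>
      intro _
      have hone : F 1 = 1 := by simpa using hF.2.2.1 1
      simp [hone]
    | cons s l ih =>
      intro hl
      have := hypType_triangle_aux F hF s l.prod μ (l.length * μ) hμ (by positivity)
        (hbound s (hl s (by simp))) (ih fun x hx => hl x (by simp [hx]))
      rw [List.prod_cons]
      refine this.trans (le_of_eq ?_)
      congr 1
      push_cast [List.length_cons]
      ring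
  refine (main l hl).trans ?_
  rw [Real.cosh_le_cosh, abs_of_nonneg (by positivity), abs_of_nonneg (by positivity)]
  have h4 : l.length ≤ 4 ^ n := hn.trans (Nat.lt_pow_self (by norm_num)).le
  have h4' : (l.length : ℝ) ≤ 4 ^ n := by exact_mod_cast h4
  exact mul_le_mul_of_nonneg_right h4' hμ
end

section
/- For every function of hyperbolic type F on a group Γ and every γ ∈ Γ, the sequence (arcosh(F(γⁿ))/n)_{n≥1} converges to a limit ℓ_F(γ) ∈ [0,∞). Moreover, the resulting length-function map 𝓕(Γ) → ℝ^Γ, F ↦ ℓ_F = (γ ↦ lim_{n→∞} arcosh(F(γⁿ))/n), is continuous when 𝓕(Γ) ⊆ ℝ^Γ carries the topology of pointwise convergence and ℝ^Γ the product topology. -/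
/-- The inverse hyperbolic cosine on `[1, ∞)`. -/
noncomputable def arcosh (x : ℝ) : ℝ := Real.log (x + Real.sqrt (x ^ 2 - 1))

open Filter Topology

namespace HypAux

lemma one_le {X : Type*} {K : X → X → ℝ} (h : IsHypKernel K) (x y : X) : 1 ≤ K x y := by
  have h1 := h.2.2.2 1 x (fun _ => y) (fun _ => 1)
  simp [h.2.2.1] at h1
  have h0 := h.2.1 x y
  rwa [abs_of_nonneg h0] at h1

lemma tri {X : Type*} {K : X → X → ℝ} (h : IsHypKernel K) (o x y : X) :
    K x y ≤ 2 * (K o x * K o y) := by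
  have h1 := h.2.2.2 2 o ![x, y] ![K o y, K o x]
  simp [Fin.sum_univ_two, h.2.2.1] at h1
  rw [h.1 y x] at h1
  have hx := one_le h o x
  have hy := one_le h o y
  have hp : 0 < K o x * K o y := by positivity
  have : (K o x * K o y) * K x y ≤ (K o x * K o y) * (2 * (K o x * K o y)) := by
    nlinarith [sq_nonneg (K o x), sq_nonneg (K o y)]
  exact le_of_mul_le_mul_left this hp

/-- Ptolemy-type four point inequality. -/
lemma four {X : Type*} {K : X → X → ℝ} (h : IsHypKernel K) (o x y z : X) :
    K x y * K o z ≤ 2 * (K x z * K o y + K y z * K o x) := by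
  have hx := one_le h o x
  have hy := one_le h o y
  have hz := one_le h o z
  have h1 := h.2.2.2 3 o ![x, y, z]
    ![K o y * K o z, K o x * K o z, -2 * (K o x * K o y)]
  simp [Fin.sum_univ_three, h.2.2.1] at h1
  rw [h.1 y x, h.1 z x, h.1 z y] at h1
  generalize K o x = a at *
  generalize K o y = b at *
  generalize K o z = c at *
  generalize K x y = p at *
  generalize K x z = q at *
  generalize K y z = r at *
  have hp : 0 < a * b * c := by positivity
  have : (a * b * c) * (p * c) ≤ (a * b * c) * (2 * (q * b + r * a)) := by
    nlinarith [sq_nonneg (b * c), sq_nonneg (a * c), sq_nonneg (a * b)]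
  exact le_of_mul_le_mul_left this hp

variable {Γ : Type*} [Group Γ] {F : Γ → ℝ}

lemma F_one_le (h : IsHypType F) (g : Γ) : 1 ≤ F g := by
  simpa using one_le h 1 g

lemma F_inv (h : IsHypType F) (g : Γ) : F g⁻¹ = F g := by
  simpa using h.1 g 1

lemma F_mul (h : IsHypType F) (g k : Γ) : F (g * k) ≤ 2 * (F g * F k) := by
  have := tri h g 1 (g * k)
  simpa [F_inv h] using this

lemma F_four (h : IsHypType F) (g : Γ) (n : ℕ) :
    F (g ^ 2) * F (g ^ (n + 1)) ≤ 2 * (F g * (F (g ^ n) + F (g ^ (n + 2)))) := by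
  have := four h g 1 (g ^ 2) (g ^ (n + 2))
  have e1 : g⁻¹ * g ^ (n + 2) = g ^ (n + 1) := by
    rw [pow_succ' g (n + 1)]; group
  have e2 : (g ^ 2)⁻¹ * g ^ (n + 2) = g ^ n := by
    rw [add_comm n 2, pow_add]; group
  have e3 : g⁻¹ * g ^ 2 = g := by group
  simp only [e1, e2, e3, inv_one, one_mul, mul_one, F_inv h] at this
  linarith

lemma growth (h : IsHypType F) (g : Γ) {r : ℝ} (hr : 1 ≤ r) (h2 : F (g ^ 2) = 4 * r * F g)
    (n : ℕ) : r * F (g ^ (n + 1)) ≤ F (g ^ (n + 2)) := by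
  have hg := F_one_le h g
  induction n with
  | zero => simp only [zero_add, pow_one, h2]; nlinarith
  | succ n ih =>
    have h4 := F_four h g (n + 1)
    rw [h2] at h4
    have h5 : 2 * r * F (g ^ (n + 1 + 1)) ≤ F (g ^ (n + 1)) + F (g ^ (n + 1 + 2)) := by
      have : F g * (2 * r * F (g ^ (n + 1 + 1))) ≤
          F g * (F (g ^ (n + 1)) + F (g ^ (n + 1 + 2))) := by linarith
      exact le_of_mul_le_mul_left this (by linarith)
    have e : n + 1 + 1 = n + 2 := rfl
    rw [e] at h5 ⊢
    have p1 := F_one_le h (g ^ (n + 1))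
    have p2 := F_one_le h (g ^ (n + 2))
    nlinarith

lemma growth_pow (h : IsHypType F) (g : Γ) {r : ℝ} (hr : 1 ≤ r)
    (h2 : F (g ^ 2) = 4 * r * F g) (n : ℕ) : r ^ n ≤ F (g ^ (n + 1)) := by
  induction n with
  | zero => simpa using F_one_le h g
  | succ n ih =>
    have := growth h g hr h2 n
    rw [pow_succ']
    exact (mul_le_mul_of_nonneg_left ih (by linarith)).trans this

/-- The shifted logarithmic displacement. -/
noncomputable def b (F : Γ → ℝ) (g : Γ) (n : ℕ) : ℝ := Real.log (2 * F (g ^ n))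

lemma b_sub (h : IsHypType F) (g : Γ) : Subadditive (b F g) := by
  intro m n
  have p1 := F_one_le h (g ^ m)
  have p2 := F_one_le h (g ^ n)
  have p3 := F_one_le h (g ^ (m + n))
  unfold b
  rw [← Real.log_mul (by positivity) (by positivity)]
  apply Real.log_le_log (by positivity)
  rw [pow_add]
  linarith [F_mul h (g ^ m) (g ^ n)]

lemma b_nonneg (h : IsHypType F) (g : Γ) (n : ℕ) : 0 ≤ b F g n :=
  Real.log_nonneg (by linarith [F_one_le h (g ^ n)])

lemma b_bdd (h : IsHypType F) (g : Γ) : BddBelow (Set.range fun n : ℕ => b F g n / n) :=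
  ⟨0, by rintro _ ⟨n, rfl⟩; exact div_nonneg (b_nonneg h g n) (Nat.cast_nonneg n)⟩

lemma b_tendsto (h : IsHypType F) (g : Γ) :
    Tendsto (fun n : ℕ => b F g n / n) atTop (𝓝 (b_sub h g).lim) :=
  (b_sub h g).tendsto_lim (b_bdd h g)

lemma lim_nonneg (h : IsHypType F) (g : Γ) : 0 ≤ (b_sub h g).lim :=
  ge_of_tendsto' (b_tendsto h g) fun n => div_nonneg (b_nonneg h g n) (Nat.cast_nonneg n)

lemma arcosh_bounds {x : ℝ} (hx : 1 ≤ x) :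
    Real.log (2 * x) - Real.log 2 ≤ arcosh x ∧ arcosh x ≤ Real.log (2 * x) := by
  have h0 := Real.sqrt_nonneg (x ^ 2 - 1)
  have h1 : Real.sqrt (x ^ 2 - 1) ≤ x := Real.sqrt_le_iff.2 ⟨by linarith, by linarith⟩
  unfold arcosh
  constructor
  · rw [Real.log_mul (by norm_num) (by positivity)]
    have := Real.log_le_log (by linarith) (show x ≤ x + Real.sqrt (x ^ 2 - 1) by linarith)
    linarith
  · exact Real.log_le_log (by linarith) (by linarith)

lemma arcosh_tendsto (h : IsHypType F) (g : Γ) :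
    Tendsto (fun n : ℕ => arcosh (F (g ^ n)) / n) atTop (𝓝 (b_sub h g).lim) := by
  have hl : Tendsto (fun n : ℕ => b F g n / n - Real.log 2 / n) atTop (𝓝 (b_sub h g).lim) := by
    simpa using (b_tendsto h g).sub (tendsto_const_div_atTop_nhds_zero_nat (Real.log 2))
  refine tendsto_of_tendsto_of_tendsto_of_le_of_le hl (b_tendsto h g) ?_ ?_
  · intro n
    have := (arcosh_bounds (F_one_le h (g ^ n))).1
    simp only [← sub_div]
    exact div_le_div_of_nonneg_right this (Nat.cast_nonneg n)
  · intro n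
    exact div_le_div_of_nonneg_right (arcosh_bounds (F_one_le h (g ^ n))).2 (Nat.cast_nonneg n)

lemma lim_lower (h : IsHypType F) (g : Γ) {k : ℕ} (hk : k ≠ 0) :
    (b F g (2 * k) - b F g k - Real.log 4) / k ≤ (b_sub h g).lim := by
  have p1 := F_one_le h (g ^ k)
  have p2 := F_one_le h (g ^ (2 * k))
  have hk0 : (0 : ℝ) < k := by positivity
  set r := F (g ^ (2 * k)) / (4 * F (g ^ k)) with hr
  have hr0 : 0 < r := by positivity
  have e : b F g (2 * k) - b F g k - Real.log 4 = Real.log r := by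
    rw [hr, Real.log_div (by positivity) (by positivity), Real.log_mul (by norm_num) (by positivity)]
    unfold b
    rw [Real.log_mul (by norm_num) (by positivity), Real.log_mul (by norm_num) (by positivity)]
    ring
  rw [e]
  rcases le_total r 1 with h1 | h1
  · exact (div_nonpos_of_nonpos_of_nonneg (Real.log_nonpos hr0.le h1) hk0.le).trans
      (lim_nonneg h g)
  have h2 : F ((g ^ k) ^ 2) = 4 * r * F (g ^ k) := by
    rw [← pow_mul, mul_comm k 2, hr]; field_simp
  have ht : Tendsto (fun n : ℕ => k * (n + 1)) atTop atTop :=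
    (tendsto_add_atTop_nat 1).const_mul_atTop' (Nat.pos_of_ne_zero hk)
  have hb := (b_tendsto h g).comp ht
  have hlow : Tendsto (fun n : ℕ => (n : ℝ) / (n + 1) * (Real.log r / k)) atTop
      (𝓝 (1 * (Real.log r / k))) := (tendsto_natCast_div_add_atTop (1 : ℝ)).mul_const _
  rw [one_mul] at hlow
  refine le_of_tendsto_of_tendsto' hlow hb fun n => ?_
  have hg := growth_pow h (g ^ k) h1 h2 n
  rw [← pow_mul] at hg
  have : (n : ℝ) * Real.log r ≤ b F g (k * (n + 1)) := by
    rw [← Real.log_pow]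
    exact Real.log_le_log (by positivity) (by have : 0 < r ^ n := by positivity
                                              linarith)
  simp only [Function.comp]
  push_cast
  rw [div_mul_div_comm, mul_comm ((n : ℝ) + 1)]
  exact div_le_div_of_nonneg_right this (by positivity)

lemma lower_tendsto (h : IsHypType F) (g : Γ) :
    Tendsto (fun k : ℕ => (b F g (2 * k) - b F g k - Real.log 4) / k) atTop
      (𝓝 (b_sub h g).lim) := by
  have ht : Tendsto (fun n : ℕ => 2 * n) atTop atTop :=
    tendsto_id.const_mul_atTop' (by norm_num)
  have h1 := ((((b_tendsto h g).comp ht).const_mul 2).sub (b_tendsto h g)).sub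
    (tendsto_const_div_atTop_nhds_zero_nat (Real.log 4))
  have e : 2 * (b_sub h g).lim - (b_sub h g).lim - 0 = (b_sub h g).lim := by ring
  rw [e] at h1
  refine h1.congr' ?_
  filter_upwards [eventually_ne_atTop 0] with k hk
  have : (k : ℝ) ≠ 0 := by exact_mod_cast hk
  simp only [Function.comp]
  push_cast
  field_simp

lemma b_continuous (g : Γ) (n : ℕ) :
    Continuous (fun F : {F : Γ → ℝ // IsHypType F} => b F.1 g n) := by
  unfold b
  refine Continuous.log ?_ fun F => ?_
  · exact continuous_const.mul ((continuous_apply _).comp continuous_subtype_val)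
  · have := F_one_le F.2 (g ^ n)
    positivity

end HypAux

/-- For every function of hyperbolic type `F` and every `γ`, the sequence
`arcosh (F (γ^n)) / n` converges to a nonnegative limit `ℓ F γ`, and the resulting
length-function map `ℓ : 𝓕(Γ) → ℝ^Γ` is continuous (pointwise-convergence topologies). -/
theorem exists_continuous_lengthFunction {Γ : Type*} [Group Γ] :
    ∃ ℓ : {F : Γ → ℝ // IsHypType F} → Γ → ℝ,
      (∀ (F : {F : Γ → ℝ // IsHypType F}) (γ : Γ), 0 ≤ ℓ F γ ∧
        Filter.Tendsto (fun n : ℕ => arcosh (F.1 (γ ^ n)) / n) Filter.atTop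
          (nhds (ℓ F γ))) ∧
      Continuous ℓ := by
  refine ⟨fun F g => (HypAux.b_sub F.2 g).lim,
    fun F g => ⟨HypAux.lim_nonneg F.2 g, HypAux.arcosh_tendsto F.2 g⟩, ?_⟩
  refine continuous_pi fun g => continuous_iff_continuousAt.2 fun F₀ => ?_
  refine tendsto_order.2 ⟨fun c hc => ?_, fun c hc => ?_⟩
  · obtain ⟨k, hk, hk0⟩ := (((HypAux.lower_tendsto F₀.2 g).eventually (lt_mem_nhds hc)).and
      (eventually_ne_atTop 0)).exists
    have hcont : Continuous (fun F : {F : Γ → ℝ // IsHypType F} =>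
        (HypAux.b F.1 g (2 * k) - HypAux.b F.1 g k - Real.log 4) / k) :=
      (((HypAux.b_continuous g _).sub (HypAux.b_continuous g _)).sub
        continuous_const).div_const _
    filter_upwards [hcont.continuousAt.eventually (lt_mem_nhds hk)] with F hF
    exact hF.trans_le (HypAux.lim_lower F.2 g hk0)
  · obtain ⟨k, hk, hk0⟩ := (((HypAux.b_tendsto F₀.2 g).eventually (gt_mem_nhds hc)).and
      (eventually_ne_atTop 0)).exists
    have hcont : Continuous (fun F : {F : Γ → ℝ // IsHypType F} => HypAux.b F.1 g k / k) :=
      (HypAux.b_continuous g _).div_const _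
    filter_upwards [hcont.continuousAt.eventually (gt_mem_nhds hk)] with F hF
    exact ((HypAux.b_sub F.2 g).lim_le_div (HypAux.b_bdd F.2 g) hk0).trans_lt hF
end

section
/- Let (X,d) be a metric space and let ε > 0 be such that the kernel (x,y) ↦ exp(ε·d(x,y)) is of hyperbolic type on X. Then X is 3-coarsely strongly-ε-hyperbolic: for all x₁,x₂,x₃,x₄ ∈ X, writing d_{ij} = d(xᵢ,xⱼ) and M = max_{1≤i,j≤4} d_{ij}, one has exp((ε/2)(d₁₃+d₂₄)) ≤ exp((ε/2)(d₁₂+d₃₄)) + exp((ε/2)(d₁₄+d₂₃)) + 3·exp((ε/2)·M). -/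
/-- Ptolemy inequality for the kernel `K - 1`, in square-root form. -/
lemma ptolemy_aux {X : Type*} (K : X → X → ℝ) (hK : IsHypKernel K) (x₁ x₂ x₃ x₄ : X)
    (a b c d e f : ℝ) (ha : 0 < a) (hc : 0 < c) (hd : 0 < d)
    (hf : 0 < f)
    (h12 : K x₁ x₂ = 1 + a ^ 2) (h13 : K x₁ x₃ = 1 + b ^ 2) (h14 : K x₁ x₄ = 1 + c ^ 2)
    (h23 : K x₂ x₃ = 1 + d ^ 2) (h24 : K x₂ x₄ = 1 + e ^ 2) (h34 : K x₃ x₄ = 1 + f ^ 2) :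
    b * e ≤ a * f + c * d := by
  obtain ⟨hs, -, h1, hC⟩ := hK
  obtain ⟨A, hA⟩ : ∃ A, A = f * d + a * c * (1 + b ^ 2) := ⟨_, rfl⟩
  obtain ⟨B, hB⟩ : ∃ B, B = f * c * (1 + a ^ 2) + a * d * (1 + c ^ 2) := ⟨_, rfl⟩
  have hA0 : 0 < A := by rw [hA]; positivity
  have hB0 : 0 < B := by rw [hB]; positivity
  have key := hC 4 x₁ ![x₁, x₂, x₃, x₄] ![B * (f * d), -A * (f * c), B * (a * c), -A * (a * d)]
  simp only [Fin.sum_univ_four, Matrix.cons_val] at key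
  rw [hs x₂ x₁, hs x₃ x₁, hs x₄ x₁, hs x₃ x₂, hs x₄ x₂, hs x₄ x₃, h1, h1, h1, h1, h12, h13, h14,
    h23, h24, h34] at key
  have hz : B * (f * d) * 1 + -A * (f * c) * (1 + a ^ 2) + B * (a * c) * (1 + b ^ 2)
      + -A * (a * d) * (1 + c ^ 2) = 0 := by
    rw [hA, hB]; ring
  rw [hz] at key
  have h2 : 2 * (a * c * d * f) * (B ^ 2 * b ^ 2 + A ^ 2 * e ^ 2 - 2 * A * B * (a * f + c * d))
      + (B * (f * d) - A * (f * c) + B * (a * c) - A * (a * d)) ^ 2 ≤ 0 := by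
    linarith
  have h3 : B ^ 2 * b ^ 2 + A ^ 2 * e ^ 2 - 2 * A * B * (a * f + c * d) ≤ 0 := by
    by_contra! h
    have : 0 < 2 * (a * c * d * f) *
      (B ^ 2 * b ^ 2 + A ^ 2 * e ^ 2 - 2 * A * B * (a * f + c * d)) := by positivity
    nlinarith [sq_nonneg (B * (f * d) - A * (f * c) + B * (a * c) - A * (a * d))]
  have h4 : (A * B) * (b * e) ≤ (A * B) * (a * f + c * d) := by
    nlinarith [sq_nonneg (B * b - A * e)]
  exact le_of_mul_le_mul_left h4 (by positivity)

/-- If `exp (ε d)` is a kernel of hyperbolic type on a metric space `(X,d)` then `X` is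
`3`-coarsely strongly-`ε`-hyperbolic: for all `x₁, x₂, x₃, x₄`,
`exp((ε/2)(d₁₃+d₂₄)) ≤ exp((ε/2)(d₁₂+d₃₄)) + exp((ε/2)(d₁₄+d₂₃)) + 3·exp((ε/2)M)`,
where `M` is the maximum of the pairwise distances. -/
theorem coarselyStronglyHyperbolic_of_exp_isHypKernel {X : Type*} [MetricSpace X]
    (ε : ℝ) (hε : 0 < ε)
    (hK : IsHypKernel fun x y : X => Real.exp (ε * dist x y)) :
    ∀ x₁ x₂ x₃ x₄ : X,
      Real.exp ((ε / 2) * (dist x₁ x₃ + dist x₂ x₄)) ≤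
        Real.exp ((ε / 2) * (dist x₁ x₂ + dist x₃ x₄)) +
        Real.exp ((ε / 2) * (dist x₁ x₄ + dist x₂ x₃)) +
        3 * Real.exp ((ε / 2) *
          (max (max (max (dist x₁ x₂) (dist x₁ x₃)) (max (dist x₁ x₄) (dist x₂ x₃)))
            (max (dist x₂ x₄) (dist x₃ x₄)))) := by
  intro x₁ x₂ x₃ x₄
  set M := (max (max (max (dist x₁ x₂) (dist x₁ x₃)) (max (dist x₁ x₄) (dist x₂ x₃)))
            (max (dist x₂ x₄) (dist x₃ x₄))) with hM
  have hM13 : dist x₁ x₃ ≤ M := by simp [hM]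
  have hM24 : dist x₂ x₄ ≤ M := by simp [hM]
  clear_value M
  have P : ∀ y : ℝ, 0 < Real.exp y := Real.exp_pos
  by_cases e12 : x₁ = x₂
  · subst e12
    rw [add_comm (dist x₁ x₃)]
    linarith [P (ε / 2 * (dist x₁ x₁ + dist x₃ x₄)), P (ε / 2 * M)]
  by_cases e34 : x₃ = x₄
  · subst e34
    linarith [P (ε / 2 * (dist x₁ x₂ + dist x₃ x₃)), P (ε / 2 * M)]
  by_cases e14 : x₁ = x₄
  · subst e14
    rw [add_comm (dist x₁ x₃), dist_comm x₂ x₁, dist_comm x₁ x₃]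
    linarith [P (ε / 2 * (dist x₁ x₁ + dist x₂ x₃)), P (ε / 2 * M)]
  by_cases e23 : x₂ = x₃
  · subst e23
    linarith [P (ε / 2 * (dist x₁ x₄ + dist x₂ x₂)), P (ε / 2 * M)]
  have sq : ∀ x y : X, Real.exp (ε * dist x y) =
      1 + (Real.sqrt (Real.exp (ε * dist x y) - 1)) ^ 2 := by
    intro x y
    have : 0 ≤ ε * dist x y := by positivity
    rw [Real.sq_sqrt (by linarith [Real.one_le_exp this])]
    ring
  have pos : ∀ x y : X, x ≠ y → 0 < Real.sqrt (Real.exp (ε * dist x y) - 1) := by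
    intro x y h
    have h0 : 0 < dist x y := dist_pos.2 h
    have : 0 < ε * dist x y := by positivity
    exact Real.sqrt_pos.2 (by linarith [Real.one_lt_exp_iff.2 this])
  have pt := ptolemy_aux _ hK x₁ x₂ x₃ x₄ _ _ _ _ _ _ (pos _ _ e12)
    (pos _ _ e14) (pos _ _ e23) (pos _ _ e34)
    (sq _ _) (sq _ _) (sq _ _) (sq _ _) (sq _ _) (sq _ _)
  have le : ∀ x y : X, Real.sqrt (Real.exp (ε * dist x y) - 1) ≤ Real.exp (ε / 2 * dist x y) := by
    intro x y
    refine Real.sqrt_le_iff.2 ⟨(P _).le, ?_⟩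
    rw [← Real.exp_nat_mul]
    have : ((2 : ℕ) : ℝ) * (ε / 2 * dist x y) = ε * dist x y := by push_cast; ring
    rw [this]; linarith
  have dbl : ∀ t : ℝ, Real.exp (ε * t) = Real.exp (ε / 2 * t) ^ 2 := by
    intro t
    rw [← Real.exp_nat_mul]
    congr 1; push_cast; ring
  have u1 := mul_le_mul (le x₁ x₂) (le x₃ x₄) (Real.sqrt_nonneg _) (P _).le
  have u2 := mul_le_mul (le x₁ x₄) (le x₂ x₃) (Real.sqrt_nonneg _) (P _).le
  have m1 : Real.exp (ε / 2 * dist x₁ x₃) ≤ Real.exp (ε / 2 * M) := by gcongr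
  have m2 : Real.exp (ε / 2 * dist x₂ x₄) ≤ Real.exp (ε / 2 * M) := by gcongr
  have s1 := (dbl _).symm.trans (sq x₁ x₃)
  have s2 := (dbl _).symm.trans (sq x₂ x₄)
  simp only [mul_add, Real.exp_add]
  have n1 := Real.sqrt_nonneg (Real.exp (ε * dist x₁ x₃) - 1)
  have n2 := Real.sqrt_nonneg (Real.exp (ε * dist x₂ x₄) - 1)
  have p1 := P (ε / 2 * dist x₁ x₃)
  have p2 := P (ε / 2 * dist x₂ x₄)
  have pM := P (ε / 2 * M)
  generalize Real.sqrt (Real.exp (ε * dist x₁ x₃) - 1) = b at *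
  generalize Real.sqrt (Real.exp (ε * dist x₂ x₄) - 1) = e at *
  generalize Real.exp (ε / 2 * dist x₁ x₃) = p at *
  generalize Real.exp (ε / 2 * dist x₂ x₄) = q at *
  generalize Real.exp (ε / 2 * M) = m at *
  have fin : p * q ≤ b * e + 3 * m := by
    refine (sq_le_sq₀ (by positivity) (by positivity)).1 ?_
    have hp : p ^ 2 ≤ m ^ 2 := by gcongr
    have hq : q ^ 2 ≤ m ^ 2 := by gcongr
    have : (p * q) ^ 2 = (b * e) ^ 2 + p ^ 2 + q ^ 2 - 1 := by
      rw [mul_pow, s1, s2]; ring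
    have h5 : 0 ≤ b * e * m := by positivity
    nlinarith
  linarith
end

section
/- Let K be a kernel of hyperbolic type on a set X. Then K(x,y) ≥ 1 for all x,y ∈ X, and the function ρ(x,y) = arcosh(K(x,y)) is a pseudometric on X: ρ(x,x) = 0, ρ(x,y) = ρ(y,x), and ρ(x,z) ≤ ρ(x,y) + ρ(y,z) for all x,y,z ∈ X. -/
/-- For a kernel of hyperbolic type `K`, one has `K ≥ 1` everywhere, and
`ρ(x,y) = arcosh (K x y)` is a pseudometric on `X`. -/
theorem arcosh_kernel_pseudometric {X : Type*} (K : X → X → ℝ) (hK : IsHypKernel K) :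
    (∀ x y : X, 1 ≤ K x y) ∧
    (∀ x : X, arcosh (K x x) = 0) ∧
    (∀ x y : X, arcosh (K x y) = arcosh (K y x)) ∧
    (∀ x y z : X, arcosh (K x z) ≤ arcosh (K x y) + arcosh (K y z)) := by
  obtain ⟨hs, h0, h1, h⟩ := hK
  have hge : ∀ x y : X, 1 ≤ K x y := by
    intro x y
    have := h 1 x (fun _ => y) (fun _ => 1)
    simp [h1] at this
    have h0' := h0 x y
    rwa [abs_of_nonneg h0'] at this
  have hr : ∀ t : ℝ, arcosh t = Real.arcosh t := fun t => rfl
  refine ⟨hge, fun x => by simp [arcosh, h1], fun x y => by rw [hs], fun x y z => ?_⟩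
  have ha := hge x y
  have hb := hge y z
  have hc := hge x z
  have hd : discrim (K x y ^ 2 - 1) (2 * (K x y * K y z - K x z)) (K y z ^ 2 - 1) ≤ 0 := by
    apply discrim_le_zero
    intro t
    have := h 2 y ![x, z] ![t, 1]
    simp [Fin.sum_univ_two, h1] at this
    rw [hs z x, hs y x] at this
    nlinarith
  have hd2 : (K x z - K x y * K y z) ^ 2 ≤ (K x y ^ 2 - 1) * (K y z ^ 2 - 1) := by
    unfold discrim at hd
    nlinarith
  have hle : K x z - K x y * K y z ≤ √(K x y ^ 2 - 1) * √(K y z ^ 2 - 1) := by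
    rw [← Real.sqrt_mul (by nlinarith)]
    exact Real.le_sqrt_of_sq_le hd2
  simp only [hr]
  have hn := add_nonneg (Real.arcosh_nonneg ha) (Real.arcosh_nonneg hb)
  rw [← Real.arcosh_cosh hn, Real.arcosh_le_arcosh (by linarith) (Real.cosh_pos _),
    Real.cosh_add, Real.cosh_arcosh ha, Real.cosh_arcosh hb, Real.sinh_arcosh ha,
    Real.sinh_arcosh hb]
  linarith
end

section
/- Let X be a set and let K : X × X → ℝ be a symmetric nonnegative function with K(x,x) = 1 for all x ∈ X. Then K is a kernel of hyperbolic type if and only if all its hyperbolic Cayley–Menger determinants are nonpositive: for every n ∈ ℕ and all points x₀,…,xₙ ∈ X (repetitions allowed), det((−K(xᵢ,xⱼ))_{0≤i,j≤n}) ≤ 0. -/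
open Polynomial in
theorem posSemidef_of_minors {n : Type*} [Fintype n] [DecidableEq n] (M : Matrix n n ℝ)
    (hM : M.IsHermitian)
    (h : ∀ s : Finset n,
      0 ≤ (M.submatrix (Subtype.val : s → n) (Subtype.val : s → n)).det) :
    M.PosSemidef := by
  rw [hM.posSemidef_iff_eigenvalues_nonneg]
  intro i
  by_contra hneg
  simp only [Pi.zero_apply, not_le] at hneg
  set μ := hM.eigenvalues i with hμ
  set p : ℝ[X] := Matrix.det (1 + (X : ℝ[X]) • M.map C) with hp
  have hc : ∀ k, 0 ≤ p.coeff k := fun k => by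
    rw [hp, Matrix.coeff_det_one_add_X_smul_eq_sum_minors]
    exact Finset.sum_nonneg fun s _ => h s
  have hc0 : p.coeff 0 = 1 := by
    rw [hp, Matrix.coeff_det_one_add_X_smul_eq_sum_minors]
    simp
  have ht : 0 ≤ -μ⁻¹ := by
    have := inv_lt_zero.mpr hneg
    linarith
  have h1 : 1 ≤ p.eval (-μ⁻¹) := by
    rw [eval_eq_sum_range, Finset.sum_range_succ', hc0]
    have : 0 ≤ ∑ k ∈ Finset.range p.natDegree, p.coeff (k + 1) * (-μ⁻¹) ^ (k + 1) :=
      Finset.sum_nonneg fun k _ => mul_nonneg (hc _) (pow_nonneg ht _)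
    simpa using this
  have h2 : p.eval (-μ⁻¹) = (1 + (-μ⁻¹) • M).det := by
    rw [hp, ← coe_evalRingHom, RingHom.map_det]
    congr 1
    ext a b
    by_cases hab : a = b <;> simp [hab] <;> ring
  have h3 : (1 + (-μ⁻¹) • M).det = 0 := by
    rw [← Matrix.exists_mulVec_eq_zero_iff]
    refine ⟨⇑(hM.eigenvectorBasis i), ?_, ?_⟩
    · intro h0
      apply (hM.eigenvectorBasis.orthonormal.ne_zero i)
      ext j
      exact congrFun h0 j
    · rw [Matrix.add_mulVec, Matrix.one_mulVec, Matrix.smul_mulVec, hM.mulVec_eigenvectorBasis,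
        ← hμ, smul_smul, neg_mul, inv_mul_cancel₀ hneg.ne, neg_one_smul, add_neg_cancel]
  linarith

theorem det_schur {X : Type*} (K : X → X → ℝ)
    (hsym : ∀ x y, K x y = K y x) (hdiag : ∀ x, K x x = 1) (n : ℕ) (x : Fin (n + 1) → X) :
    (Matrix.of fun i j => -K (x i) (x j)).det =
      -(Matrix.of fun i j : Fin n =>
        K (x 0) (x i.succ) * K (x 0) (x j.succ) - K (x i.succ) (x j.succ)).det := by
  let e : Fin n ⊕ PUnit.{1} ≃ Fin (n + 1) :=
    ((finSuccEquiv n).trans (Equiv.optionEquivSumPUnit.{0} (Fin n))).symm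
  rw [← Matrix.det_submatrix_equiv_self e]
  have hb : (Matrix.of fun i j => -K (x i) (x j)).submatrix e e =
      Matrix.fromBlocks (Matrix.of fun i j : Fin n => -K (x i.succ) (x j.succ))
        (Matrix.of fun i _ => -K (x 0) (x i.succ))
        (Matrix.of fun _ j => -K (x 0) (x j.succ)) (-1) := by
    ext (i | i) (j | j) <;> simp [e, hdiag, hsym]
  let _ : Invertible (-1 : Matrix PUnit.{1} PUnit.{1} ℝ) := ⟨-1, by simp, by simp⟩
  have hinv : ⅟(-1 : Matrix PUnit.{1} PUnit.{1} ℝ) = -1 := rfl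
  rw [hb, Matrix.det_fromBlocks₂₂, hinv]
  simp only [Matrix.det_unique, Matrix.neg_apply, Matrix.one_apply_eq, neg_one_mul]
  congr 2
  ext i j
  simp [Matrix.mul_apply]
  ring

theorem isHypKernel_iff_cayleyMenger {X : Type*} (K : X → X → ℝ)
    (hsym : ∀ x y, K x y = K y x) (hnn : ∀ x y, 0 ≤ K x y) (hdiag : ∀ x, K x x = 1) :
    IsHypKernel K ↔
      ∀ (n : ℕ) (x : Fin (n + 1) → X),
        (Matrix.of fun i j => -K (x i) (x j)).det ≤ 0 := by
  have herm : ∀ (n : ℕ) (x₀ : X) (x : Fin n → X), (Matrix.of fun i j : Fin n =>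
        K x₀ (x i) * K x₀ (x j) - K (x i) (x j)).IsHermitian := fun n x₀ x => by
    ext i j
    simp [hsym (x j) (x i), mul_comm]
  have quad : ∀ (n : ℕ) (x₀ : X) (x lam : Fin n → _), star lam ⬝ᵥ ((Matrix.of fun i j : Fin n =>
        K x₀ (x i) * K x₀ (x j) - K (x i) (x j)).mulVec lam) =
        (∑ k, lam k * K x₀ (x k)) ^ 2 - ∑ i, ∑ j, lam i * lam j * K (x i) (x j) := by
    intro n x₀ x lam
    rw [sq, Finset.sum_mul_sum, ← Finset.sum_sub_distrib]
    simp only [dotProduct, Matrix.mulVec, Matrix.of_apply, Finset.mul_sum,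
      ← Finset.sum_sub_distrib]
    refine Finset.sum_congr rfl fun i _ => Finset.sum_congr rfl fun j _ => ?_
    simp
    ring
  constructor
  · rintro ⟨-, -, -, h⟩ n x
    rw [det_schur K hsym hdiag]
    have : (Matrix.of fun i j : Fin n =>
        K (x 0) (x i.succ) * K (x 0) (x j.succ) - K (x i.succ) (x j.succ)).PosSemidef := by
      refine .of_dotProduct_mulVec_nonneg (herm n (x 0) fun i => x i.succ) fun lam => ?_
      rw [quad n (x 0) (fun i => x i.succ) lam]
      exact sub_nonneg.mpr (h n (x 0) _ lam)
    linarith [this.det_nonneg]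
  · intro h
    refine ⟨hsym, hnn, hdiag, fun n x₀ x lam => ?_⟩
    rw [← sub_nonneg, ← quad]
    refine (posSemidef_of_minors _ (herm n x₀ x) fun s => ?_).dotProduct_mulVec_nonneg lam
    have := h (Fintype.card s)
      (Fin.cons x₀ fun i => x ((Fintype.equivFin s).symm i))
    rw [det_schur K hsym hdiag] at this
    rw [← Matrix.det_submatrix_equiv_self (Fintype.equivFin s).symm]
    simp only [Fin.cons_zero, Fin.cons_succ] at this
    exact neg_nonpos.mp this
end

section
/- Let K be a kernel of hyperbolic type on a set X that separates points, i.e., K(x,y) > 1 whenever x ≠ y. Then for every t ∈ (0,1), the pointwise power K^t is strictly of hyperbolic type: K^t is a kernel of hyperbolic type, and for every x₀ ∈ X, all pairwise distinct points x₁,…,xₙ ∈ X \ {x₀}, and every nonzero λ ∈ ℝⁿ, one has ∑_{i,j=1}^n λᵢλⱼ (K^t(x₀,xᵢ)·K^t(x₀,xⱼ) − K^t(xᵢ,xⱼ)) > 0. -/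
theorem aux_choose_sign (t : ℝ) (ht : t ∈ Set.Ioo (0 : ℝ) 1) (k : ℕ) :
    0 < -((-1) ^ (k + 1) * Ring.choose t (k + 1)) := by
  induction k with
  | zero => simpa using ht.1
  | succ k ih =>
    have h1 := Ring.descPochhammer_eq_factorial_smul_choose t (k + 1 + 1)
    have h2 := Ring.descPochhammer_eq_factorial_smul_choose t (k + 1)
    rw [descPochhammer_succ_right, Polynomial.smeval_mul, h2] at h1
    simp [Polynomial.smeval_natCast, Nat.factorial_succ] at h1
    have h0 : ((k.factorial : ℕ) : ℝ) ≠ 0 := by positivity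
    have h3 : Ring.choose t (k + 1 + 1) * (k + 2) = Ring.choose t (k + 1) * (t - (k + 1)) := by
      have hk : ((k : ℝ) + 1) ≠ 0 := by positivity
      apply mul_left_cancel₀ h0
      apply mul_left_cancel₀ hk
      linear_combination -h1
    have h4 : Ring.choose t (k + 1 + 1) = Ring.choose t (k + 1) * (t - (k + 1)) / (k + 2) := by
      rw [eq_div_iff (by positivity)]; exact h3
    have h5 : -((-1) ^ (k + 1 + 1) * Ring.choose t (k + 1 + 1))
        = -((-1) ^ (k + 1) * Ring.choose t (k + 1)) * (((k + 1) - t) / (k + 2)) := by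
      rw [h4, pow_succ]; ring
    rw [h5]
    apply mul_pos ih
    apply div_pos _ (by positivity)
    have := ht.2
    have : (0 : ℝ) ≤ k := by positivity
    linarith

theorem aux_series (t : ℝ) (s : ℝ) (hs : |s| < 1) :
    HasSum (fun k : ℕ => -((-1) ^ (k + 1) * Ring.choose t (k + 1)) * s ^ (k + 1))
      (1 - (1 - s) ^ t) := by
  have h := (Real.one_add_rpow_hasFPowerSeriesOnBall_zero (a := t)).hasSum (y := -s)
    (by simpa [enorm_eq_nnnorm, ← NNReal.coe_lt_coe] using hs)
  simp only [binomialSeries_apply, zero_add, List.ofFn_const, List.prod_replicate,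
    smul_eq_mul] at h
  have h' := (hasSum_nat_add_iff' 1).mpr h
  have h'' := h'.neg
  have e1 : (fun k : ℕ => -((-1) ^ (k + 1) * Ring.choose t (k + 1)) * s ^ (k + 1)) =
      fun k : ℕ => -(Ring.choose t (k + 1) * (-s) ^ (k + 1)) := by
    funext k
    rw [neg_pow s]; ring
  have e2 : 1 - (1 - s) ^ t =
      -((1 + -s) ^ t - ∑ i ∈ Finset.range 1, Ring.choose t i * (-s) ^ i) := by
    simp [← sub_eq_add_neg]
  rw [e1, e2]
  exact h''

theorem aux_psd_pow {n : ℕ} (M : Matrix (Fin n) (Fin n) ℝ) (hM : M.PosSemidef) (k : ℕ) :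
    (Matrix.of fun i j => M i j ^ (k + 1)).PosSemidef := by
  induction k with
  | zero =>
    have e : (Matrix.of fun i j => M i j ^ (0 + 1)) = M := by ext i j; simp
    rw [e]; exact hM
  | succ k ih =>
    have := ih.hadamard hM
    have e : (Matrix.of fun i j => M i j ^ (k + 1 + 1)) =
        (Matrix.of fun i j => M i j ^ (k + 1)).hadamard M := by
      ext i j; simp [pow_succ]
    rw [e]; exact this

theorem aux_quad {n : ℕ} (M : Matrix (Fin n) (Fin n) ℝ) (u : Fin n → ℝ) :
    star u ⬝ᵥ (M.mulVec u) = ∑ i, ∑ j, u i * u j * M i j := by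
  simp only [dotProduct, Matrix.mulVec, Finset.mul_sum, Pi.star_apply, star_trivial]
  refine Finset.sum_congr rfl fun i _ => Finset.sum_congr rfl fun j _ => by ring

theorem aux_hasSum {n : ℕ} (M : Matrix (Fin n) (Fin n) ℝ)
    (hlt : ∀ i j, |M i j| < 1) (t : ℝ) (u : Fin n → ℝ) :
    HasSum (fun k : ℕ => -((-1) ^ (k + 1) * Ring.choose t (k + 1)) *
        ∑ i, ∑ j, u i * u j * M i j ^ (k + 1))
      (∑ i, ∑ j, u i * u j * (1 - (1 - M i j) ^ t)) := by
  have : HasSum (fun k : ℕ => ∑ i, ∑ j, u i * u j *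
      (-((-1) ^ (k + 1) * Ring.choose t (k + 1)) * M i j ^ (k + 1)))
      (∑ i, ∑ j, u i * u j * (1 - (1 - M i j) ^ t)) :=
    hasSum_sum fun i _ => hasSum_sum fun j _ => (aux_series t _ (hlt i j)).mul_left _
  convert this using 2 with k
  simp only [Finset.mul_sum]
  refine Finset.sum_congr rfl fun i _ => Finset.sum_congr rfl fun j _ => by ring

theorem aux_term_nonneg {n : ℕ} (M : Matrix (Fin n) (Fin n) ℝ) (hM : M.PosSemidef)
    (t : ℝ) (ht : t ∈ Set.Ioo (0 : ℝ) 1) (u : Fin n → ℝ) (k : ℕ) :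
    0 ≤ -((-1) ^ (k + 1) * Ring.choose t (k + 1)) *
        ∑ i, ∑ j, u i * u j * M i j ^ (k + 1) := by
  refine mul_nonneg (aux_choose_sign t ht k).le ?_
  have := (aux_psd_pow M hM k).dotProduct_mulVec_nonneg u
  rw [aux_quad] at this
  simpa using this

theorem aux_cs {n : ℕ} (M : Matrix (Fin n) (Fin n) ℝ) (hM : M.PosSemidef) (i j : Fin n) :
    M i j ^ 2 ≤ M i i * M j j := by
  have h := (hM.submatrix ![i, j]).det_nonneg
  have hs : M j i = M i j := by simpa using hM.1.apply i j
  rw [Matrix.det_fin_two] at h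
  simp [hs] at h
  nlinarith

theorem aux_strict {n : ℕ} (M : Matrix (Fin n) (Fin n) ℝ) (hM : M.PosSemidef)
    (hlt : ∀ i j, |M i j| < 1) (hpos : ∀ i, 0 < M i i)
    (hdis : ∀ i j, M i j = M i i → M j j = M i i → i = j)
    (t : ℝ) (ht : t ∈ Set.Ioo (0 : ℝ) 1) (u : Fin n → ℝ) (hu : u ≠ 0) :
    0 < ∑ i, ∑ j, u i * u j * (1 - (1 - M i j) ^ t) := by
  have hS := aux_hasSum M hlt t u
  have hnn := aux_term_nonneg M hM t ht u
  refine lt_of_le_of_ne (hS.nonneg hnn) fun h0 => ?_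
  rw [← h0, hasSum_zero_iff_of_nonneg hnn] at hS
  have hker : ∀ (i : Fin n) (k : ℕ), ∑ j, M i j ^ (k + 1) * u j = 0 := by
    intro i k
    have h1 := congrFun hS k
    have h2 := (mul_eq_zero.mp h1).resolve_left (aux_choose_sign t ht k).ne'
    have h3 := ((aux_psd_pow M hM k).dotProduct_mulVec_zero_iff u).mp
      (by rw [aux_quad]; simpa using h2)
    simpa [Matrix.mulVec, dotProduct] using congrFun h3 i
  have hpoly : ∀ (i : Fin n) (p : Polynomial ℝ), ∑ j, M i j * p.eval (M i j) * u j = 0 := by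
    intro i p
    induction p using Polynomial.induction_on' with
    | add p q hp hq =>
      simp only [Polynomial.eval_add, mul_add, add_mul, Finset.sum_add_distrib, hp, hq, add_zero]
    | monomial k a =>
      have := congrArg (a * ·) (hker i k)
      simp only [Finset.mul_sum, mul_zero] at this
      rw [← this]
      refine Finset.sum_congr rfl fun j _ => ?_
      rw [Polynomial.eval_monomial]; ring
  obtain ⟨i₀, hi₀⟩ := Function.ne_iff.mp hu
  obtain ⟨i, hi, hmax⟩ := Finset.exists_max_image
    (Finset.univ.filter fun j => u j ≠ 0) (fun j => M j j) ⟨i₀, by simpa using hi₀⟩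
  simp only [Finset.mem_filter, Finset.mem_univ, true_and] at hi hmax
  have hne : ∀ j, u j ≠ 0 → j ≠ i → M i i ≠ M i j := by
    intro j hj hji he
    have hc := aux_cs M hM i j
    rw [← he] at hc
    have h1 := hmax j hj
    have h2 : M i i ≤ M j j := by
      have := hpos i
      by_contra hlt'
      push Not at hlt'
      nlinarith
    exact hji (hdis i j he.symm (le_antisymm h1 h2)).symm
  let p : Polynomial ℝ := ∏ j ∈ Finset.univ.filter (fun j => u j ≠ 0 ∧ j ≠ i),
    (Polynomial.X - Polynomial.C (M i j))
  have hp := hpoly i p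
  rw [Finset.sum_eq_single i] at hp
  · have hpi : p.eval (M i i) ≠ 0 := by
      simp only [p, Polynomial.eval_prod, Finset.prod_ne_zero_iff]
      intro j hj
      simp only [Finset.mem_filter, Finset.mem_univ, true_and] at hj
      simpa [sub_eq_zero] using hne j hj.1 hj.2
    exact (mul_ne_zero (mul_ne_zero (hpos i).ne' hpi) hi) hp
  · intro j _ hji
    by_cases hj : u j = 0
    · simp [hj]
    · have : p.eval (M i j) = 0 := by
        simp only [p, Polynomial.eval_prod]
        exact Finset.prod_eq_zero (i := j) (by simp [hj, hji]) (by simp)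
      simp [this]
  · simp

theorem aux_ge_one {X : Type*} (K : X → X → ℝ)
    (hK : IsHypKernel K) (hsep : ∀ x y : X, x ≠ y → 1 < K x y) (x y : X) : 1 ≤ K x y := by
  by_cases h : x = y
  · subst h; exact (hK.2.2.1 x).ge
  · exact (hsep x y h).le

/-- The normalized visual kernel. -/
noncomputable def auxM {X : Type*} (K : X → X → ℝ) (x₀ : X) {n : ℕ} (x : Fin n → X) :
    Matrix (Fin n) (Fin n) ℝ :=
  Matrix.of fun i j => 1 - K (x i) (x j) / (K x₀ (x i) * K x₀ (x j))

theorem auxM_psd {X : Type*} (K : X → X → ℝ)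
    (hK : IsHypKernel K) (hge : ∀ x y : X, 1 ≤ K x y) (x₀ : X) {n : ℕ} (x : Fin n → X) :
    (auxM K x₀ x).PosSemidef := by
  have hpos : ∀ i, 0 < K x₀ (x i) := fun i => lt_of_lt_of_le one_pos (hge _ _)
  refine Matrix.PosSemidef.of_dotProduct_mulVec_nonneg ?_ fun u => ?_
  · ext i j
    simp [auxM, hK.1 (x j) (x i), mul_comm]
  · rw [aux_quad]
    have h := hK.2.2.2 n x₀ x (fun i => u i / K x₀ (x i))
    have e1 : ∑ k, u k / K x₀ (x k) * K x₀ (x k) = ∑ k, u k :=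
      Finset.sum_congr rfl fun k _ => div_mul_cancel₀ _ (hpos k).ne'
    rw [e1, sq, Finset.sum_mul_sum, ← sub_nonneg, ← Finset.sum_sub_distrib] at h
    refine h.trans_eq (Finset.sum_congr rfl fun i _ => ?_)
    rw [← Finset.sum_sub_distrib]
    refine Finset.sum_congr rfl fun j _ => ?_
    have := (hpos i).ne'
    have := (hpos j).ne'
    simp only [auxM, Matrix.of_apply]
    field_simp

theorem auxM_diag_lt {X : Type*} (K : X → X → ℝ)
    (hK : IsHypKernel K) (hge : ∀ x y : X, 1 ≤ K x y) (x₀ : X) {n : ℕ} (x : Fin n → X)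
    (i : Fin n) : auxM K x₀ x i i < 1 := by
  have hpos : 0 < K x₀ (x i) := lt_of_lt_of_le one_pos (hge _ _)
  simp only [auxM, Matrix.of_apply, hK.2.2.1]
  have : 0 < 1 / (K x₀ (x i) * K x₀ (x i)) := by positivity
  linarith

theorem auxM_lt {X : Type*} (K : X → X → ℝ)
    (hK : IsHypKernel K) (hge : ∀ x y : X, 1 ≤ K x y) (x₀ : X) {n : ℕ} (x : Fin n → X)
    (i j : Fin n) : |auxM K x₀ x i j| < 1 := by
  have hM := auxM_psd K hK hge x₀ x
  have h := aux_cs _ hM i j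
  have h1 := auxM_diag_lt K hK hge x₀ x i
  have h2 := auxM_diag_lt K hK hge x₀ x j
  have h3 := hM.diag_nonneg (i := i)
  have h4 := hM.diag_nonneg (i := j)
  rw [← sq_lt_one_iff_abs_lt_one]
  nlinarith

theorem aux_rewrite {X : Type*} (K : X → X → ℝ)
    (hge : ∀ x y : X, 1 ≤ K x y) (x₀ : X) {n : ℕ} (x : Fin n → X) (t : ℝ) (lam : Fin n → ℝ) :
    ∑ i, ∑ j, lam i * lam j * (K x₀ (x i) ^ t * K x₀ (x j) ^ t - K (x i) (x j) ^ t) =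
    ∑ i, ∑ j, (lam i * K x₀ (x i) ^ t) * (lam j * K x₀ (x j) ^ t) *
      (1 - (1 - auxM K x₀ x i j) ^ t) := by
  have hpos : ∀ a b, 0 < K a b := fun a b => lt_of_lt_of_le one_pos (hge _ _)
  refine Finset.sum_congr rfl fun i _ => Finset.sum_congr rfl fun j _ => ?_
  have hi := hpos x₀ (x i)
  have hj := hpos x₀ (x j)
  simp only [auxM, Matrix.of_apply, sub_sub_cancel]
  rw [Real.div_rpow (hpos _ _).le (mul_pos hi hj).le, Real.mul_rpow hi.le hj.le]
  have := (Real.rpow_pos_of_pos hi t).ne'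
  have := (Real.rpow_pos_of_pos hj t).ne'
  field_simp

/-- If `K` is a kernel of hyperbolic type separating points (`K(x,y) > 1` for `x ≠ y`),
then for `t ∈ (0,1)` the power `K^t` is strictly of hyperbolic type: it is of hyperbolic
type, and each visual kernel `K^t(x₀,x)·K^t(x₀,y) − K^t(x,y)` is strictly of positive type
on `X \ {x₀}`. -/
theorem pow_strictly_hyperbolic_of_separating {X : Type*} (K : X → X → ℝ)
    (hK : IsHypKernel K) (hsep : ∀ x y : X, x ≠ y → 1 < K x y)
    (t : ℝ) (ht : t ∈ Set.Ioo (0 : ℝ) 1) :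
    IsHypKernel (fun x y => K x y ^ t) ∧
    ∀ (x₀ : X) (n : ℕ) (x : Fin n → X), Function.Injective x → (∀ i, x i ≠ x₀) →
      ∀ lam : Fin n → ℝ, lam ≠ 0 →
        0 < ∑ i, ∑ j, lam i * lam j *
          (K x₀ (x i) ^ t * K x₀ (x j) ^ t - K (x i) (x j) ^ t) := by
  have hge := aux_ge_one K hK hsep
  have hpos : ∀ a b, 0 < K a b := fun a b => lt_of_lt_of_le one_pos (hge _ _)
  refine ⟨⟨fun x y => by simp only [hK.1 x y], fun x y => Real.rpow_nonneg (hK.2.1 x y) t,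
    fun x => by simp only [hK.2.2.1 x, Real.one_rpow], fun n x₀ x lam => ?_⟩,
    fun x₀ n x hx hx0 lam hlam => ?_⟩
  · have h := (aux_hasSum _ (auxM_lt K hK hge x₀ x) t (fun i => lam i * K x₀ (x i) ^ t)).nonneg
      (aux_term_nonneg _ (auxM_psd K hK hge x₀ x) t ht _)
    rw [← aux_rewrite K hge] at h
    rw [← sub_nonneg]
    refine h.trans_eq ?_
    rw [sq, Finset.sum_mul_sum, ← Finset.sum_sub_distrib]
    refine Finset.sum_congr rfl fun i _ => ?_
    rw [← Finset.sum_sub_distrib]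
    refine Finset.sum_congr rfl fun j _ => ?_
    ring
  · rw [aux_rewrite K hge]
    refine aux_strict _ (auxM_psd K hK hge x₀ x) (auxM_lt K hK hge x₀ x) ?_ ?_ t ht _ ?_
    · intro i
      have h1 := hsep x₀ (x i) (hx0 i).symm
      simp only [auxM, Matrix.of_apply, hK.2.2.1, sub_pos]
      rw [div_lt_one (by positivity)]
      nlinarith
    · intro i j h1 h2
      by_contra hij
      have hs := hsep (x i) (x j) fun h => hij (hx h)
      have pi := hpos x₀ (x i)
      have pj := hpos x₀ (x j)
      simp only [auxM, Matrix.of_apply, hK.2.2.1, sub_right_inj] at h1 h2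
      have e : K x₀ (x j) = K x₀ (x i) := by
        rw [div_eq_div_iff (by positivity) (by positivity)] at h2
        nlinarith
      rw [e, div_left_inj' (by positivity)] at h1
      linarith
    · obtain ⟨i, hi⟩ := Function.ne_iff.mp hlam
      refine Function.ne_iff.mpr ⟨i, ?_⟩
      exact mul_ne_zero hi (Real.rpow_pos_of_pos (hpos _ _) t).ne'
end

section
/- Let X be a set and let K : X × X → ℝ be a kernel of conditionally negative type that vanishes only on the diagonal (K(x,y) = 0 implies x = y). Then for every t ∈ (0,1), the pointwise power K^t is strictly of conditionally negative type: for all n, all pairwise distinct x₁,…,xₙ ∈ X and every nonzero λ ∈ ℝⁿ with ∑ₖ λₖ = 0, one has ∑_{i,j=1}^n λᵢλⱼ K(xᵢ,xⱼ)^t < 0. -/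
/-- A kernel of conditionally negative type on a set `X`: symmetric, vanishing on the
diagonal, with `∑ᵢⱼ λᵢλⱼ K(xᵢ,xⱼ) ≤ 0` whenever `∑ₖ λₖ = 0`. -/
def IsCondNegKernel {X : Type*} (K : X → X → ℝ) : Prop :=
  (∀ x y, K x y = K y x) ∧ (∀ x, K x x = 0) ∧
  ∀ (n : ℕ) (x : Fin n → X) (lam : Fin n → ℝ),
    (∑ k, lam k) = 0 → (∑ i, ∑ j, lam i * lam j * K (x i) (x j)) ≤ 0

open MeasureTheory Filter Topology in
theorem aux_psd_pow_s13 {n : ℕ} (B : Fin n → Fin n → ℝ) (hs : ∀ i j, B i j = B j i)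
    (hB : ∀ c : Fin n → ℝ, 0 ≤ ∑ i, ∑ j, c i * c j * B i j) (k : ℕ) (c : Fin n → ℝ) :
    0 ≤ ∑ i, ∑ j, c i * c j * B i j ^ k := by
  have key : ∀ A : Matrix (Fin n) (Fin n) ℝ, ∀ c : Fin n → ℝ,
      star c ⬝ᵥ (A.mulVec c) = ∑ i, ∑ j, c i * c j * A i j := by
    intro A c
    simp only [dotProduct, Matrix.mulVec, Finset.mul_sum, star_trivial]
    refine Finset.sum_congr rfl fun i _ => Finset.sum_congr rfl fun j _ => by ring
  have h : ∀ k : ℕ, (Matrix.of fun i j => B i j ^ k).PosSemidef := by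
    intro k
    induction k with
    | zero =>
      refine Matrix.PosSemidef.of_dotProduct_mulVec_nonneg ?_ fun c => ?_
      · ext i j; simp
      · rw [key]
        simp only [Matrix.of_apply, pow_zero, mul_one]
        rw [← Finset.sum_mul_sum]
        exact mul_self_nonneg _
    | succ k ih =>
      have h1 : (Matrix.of B).PosSemidef := by
        refine Matrix.PosSemidef.of_dotProduct_mulVec_nonneg ?_ fun c => ?_
        · ext i j; simp [hs i j]
        · rw [key]; exact hB c
      have h2 := ih.hadamard h1
      have e : (Matrix.of fun i j => B i j ^ (k + 1)) =
          (Matrix.of fun i j => B i j ^ k).hadamard (Matrix.of B) := by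
        ext i j; simp [pow_succ]
      rw [e]
      exact h2
  have := (h k).dotProduct_mulVec_nonneg c
  rw [key] at this
  exact this

theorem aux_nonneg {n : ℕ} (M : Fin n → Fin n → ℝ) (hs : ∀ i j, M i j = M j i)
    (hd : ∀ i, M i i = 0)
    (hM : ∀ c : Fin n → ℝ, ∑ k, c k = 0 → ∑ i, ∑ j, c i * c j * M i j ≤ 0)
    (i j : Fin n) : 0 ≤ M i j := by
  have h := hM (fun k => (if k = i then 1 else 0) - (if k = j then 1 else 0))
    (by simp [Finset.sum_sub_distrib])
  simp only [sub_mul, mul_sub, Finset.sum_sub_distrib, ite_mul, mul_ite, one_mul, mul_one,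
    zero_mul, mul_zero, Finset.sum_ite_eq', Finset.mem_univ, if_true, hd]
    at h
  simp [hd] at h
  linarith [hs i j]

theorem aux_base {n : ℕ} (M : Fin n → Fin n → ℝ) (hs : ∀ i j, M i j = M j i)
    (hd : ∀ i, M i i = 0)
    (hM : ∀ c : Fin n → ℝ, ∑ k, c k = 0 → ∑ i, ∑ j, c i * c j * M i j ≤ 0)
    (o : Fin n) (c : Fin n → ℝ) : 0 ≤ ∑ i, ∑ j, c i * c j * (M i o + M j o - M i j) := by
  set S := ∑ i, c i with hS
  set T := ∑ i, c i * M i o with hT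
  have h := hM (fun k => c k - S * (if k = o then 1 else 0))
    (by simp [Finset.sum_sub_distrib, hS])
  have e1 : ∑ i, ∑ j, (c i - S * (if i = o then 1 else 0)) * (c j - S * (if j = o then 1 else 0))
      * M i j = ∑ i, ∑ j, c i * c j * M i j - 2 * S * T := by
    have : ∀ i, ∑ j, (c i - S * (if i = o then 1 else 0)) * (c j - S * (if j = o then 1 else 0))
      * M i j = ∑ j, c i * c j * M i j - S * (c i * M i o)
        - S * (if i = o then ∑ j, c j * M o j else 0) := by
      intro i
      have : ∀ j, (c i - S * (if i = o then 1 else 0)) * (c j - S * (if j = o then 1 else 0))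
        * M i j = c i * c j * M i j - (if j = o then S * (c i * M i o) else 0)
          - S * (if i = o then c j * M o j else 0) := by
        intro j
        by_cases h1 : i = o <;> by_cases h2 : j = o <;> simp [h1, h2, hd] <;> ring
      rw [Finset.sum_congr rfl fun j _ => this j]
      simp only [Finset.sum_sub_distrib, ← Finset.mul_sum]
      by_cases h1 : i = o <;> simp [h1]
    rw [Finset.sum_congr rfl fun j _ => this j]
    simp only [Finset.sum_sub_distrib, ← Finset.mul_sum, Finset.sum_ite_eq', Finset.mem_univ,
      if_true]
    have : ∑ j, c j * M o j = T := by
      rw [hT]; exact Finset.sum_congr rfl fun j _ => by rw [hs]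
    rw [this]; ring
  have e2 : ∑ i, ∑ j, c i * c j * (M i o + M j o - M i j)
      = 2 * S * T - ∑ i, ∑ j, c i * c j * M i j := by
    have h1 : S * T = ∑ i, ∑ j, c i * c j * M j o := by
      rw [hS, hT, Finset.sum_mul_sum]
      simp only [mul_assoc]
    have h2 : T * S = ∑ i, ∑ j, c i * c j * M i o := by
      rw [hS, hT, Finset.sum_mul_sum]
      exact Finset.sum_congr rfl fun i _ => Finset.sum_congr rfl fun j _ => by ring
    rw [show 2 * S * T = T * S + S * T by ring, h1, h2]
    simp only [← Finset.sum_add_distrib, ← Finset.sum_sub_distrib]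
    exact Finset.sum_congr rfl fun i _ => Finset.sum_congr rfl fun j _ => by ring
  have h := e1.symm.trans_le h
  rw [e2]; linarith

theorem aux_inv {n : ℕ} (M : Fin n → Fin n → ℝ) (hs : ∀ i j, M i j = M j i)
    (hd : ∀ i, M i i = 0)
    (hM : ∀ c : Fin n → ℝ, ∑ k, c k = 0 → ∑ i, ∑ j, c i * c j * M i j ≤ 0)
    (o : Fin n) (s : ℝ) (hs0 : 0 < s) (c : Fin n → ℝ) :
    0 ≤ ∑ i, ∑ j, c i * c j * (s + M i j)⁻¹ := by
  have h0 := aux_nonneg M hs hd hM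
  have hA := aux_base M hs hd hM o
  have hv : ∀ i, 0 < s + M i o := fun i => by linarith [h0 i o]
  let B : Fin n → Fin n → ℝ := fun i j =>
    (M i o * M j o + s * (M i o + M j o - M i j)) / ((s + M i o) * (s + M j o))
  have hBs : ∀ i j, B i j = B j i := by
    intro i j; simp only [B]; rw [hs i j]; ring
  have h1B : ∀ i j, 1 - B i j = s * (s + M i j) / ((s + M i o) * (s + M j o)) := by
    intro i j
    have := (hv i).ne'
    have := (hv j).ne'
    simp only [B]; field_simp; ring
  have hBlt : ∀ i j, B i j < 1 := by
    intro i j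
    have : 0 < 1 - B i j := by
      rw [h1B]
      have := hv i
      have := hv j
      have := h0 i j
      positivity
    linarith
  have hBp : ∀ c : Fin n → ℝ, 0 ≤ ∑ i, ∑ j, c i * c j * B i j := by
    intro c
    have e : ∑ i, ∑ j, c i * c j * B i j = (∑ i, c i / (s + M i o) * M i o) *
        (∑ i, c i / (s + M i o) * M i o) + s * ∑ i, ∑ j, (c i / (s + M i o)) *
          (c j / (s + M j o)) * (M i o + M j o - M i j) := by
      rw [Finset.sum_mul_sum]
      simp only [Finset.mul_sum, ← Finset.sum_add_distrib]
      refine Finset.sum_congr rfl fun i _ => Finset.sum_congr rfl fun j _ => ?_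
      have := (hv i).ne'
      have := (hv j).ne'
      simp only [B]; field_simp
    rw [e]
    exact add_nonneg (mul_self_nonneg _) (mul_nonneg hs0.le (hA _))
  have hBgt : ∀ i j, -1 < B i j := by
    intro i j
    have h := hBp (fun k => (if k = i then 1 else 0) + (if k = j then 1 else 0))
    simp [add_mul, mul_add, Finset.sum_add_distrib] at h
    linarith [hBs i j, hBlt i i, hBlt j j]
  have hsum : ∀ i j, HasSum (fun k : ℕ => c i * c j * (s / ((s + M i o) * (s + M j o)) *
      B i j ^ k)) (c i * c j * (s + M i j)⁻¹) := by
    intro i j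
    have h := hasSum_geometric_of_abs_lt_one (abs_lt.2 ⟨hBgt i j, hBlt i j⟩)
    have h2 := (h.mul_left (s / ((s + M i o) * (s + M j o)))).mul_left (c i * c j)
    suffices e : (s + M i j)⁻¹ = s / ((s + M i o) * (s + M j o)) * (1 - B i j)⁻¹ by
      rw [e]; exact h2
    rw [h1B]
    have := (hv i).ne'
    have := (hv j).ne'
    have : s + M i j ≠ 0 := by linarith [h0 i j]
    field_simp
  have hS := hasSum_sum (s := Finset.univ) fun i _ =>
    hasSum_sum (s := Finset.univ) fun j _ => hsum i j
  refine hS.nonneg fun k => ?_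
  have h := mul_nonneg hs0.le (aux_psd_pow_s13 B hBs hBp k fun i => c i / (s + M i o))
  convert h using 1
  simp only [Finset.mul_sum]
  refine Finset.sum_congr rfl fun i _ => Finset.sum_congr rfl fun j _ => ?_
  have := (hv i).ne'
  have := (hv j).ne'
  field_simp

open MeasureTheory Filter Topology in
theorem aux_ev {n : ℕ} (M : Fin n → Fin n → ℝ)
    (hd : ∀ i, M i i = 0) (hp : ∀ i j, i ≠ j → 0 < M i j)
    (c : Fin n → ℝ) (hc : c ≠ 0) :
    ∀ᶠ s in 𝓝[>] (0 : ℝ), 0 < ∑ i, ∑ j, c i * c j * (s + M i j)⁻¹ := by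
  have ht : Tendsto (fun s : ℝ => ∑ i, ∑ j, c i * c j * (s * (s + M i j)⁻¹)) (𝓝[>] 0)
      (𝓝 (∑ i, ∑ j, c i * c j * (if i = j then 1 else 0))) := by
    refine tendsto_finsetSum _ fun i _ => tendsto_finsetSum _ fun j _ => ?_
    refine Tendsto.const_mul _ ?_
    by_cases h : i = j
    · subst h
      simp only [hd, if_true, add_zero]
      refine tendsto_const_nhds.congr' ?_
      filter_upwards [self_mem_nhdsWithin] with s hs
      rw [mul_inv_cancel₀ (ne_of_gt hs)]
    · simp only [h, if_false]
      have hcont : ContinuousAt (fun s : ℝ => s * (s + M i j)⁻¹) 0 := by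
        have : (0 : ℝ) + M i j ≠ 0 := by linarith [hp i j h]
        fun_prop (disch := assumption)
      have := hcont.tendsto
      simp only [zero_mul] at this
      exact this.mono_left nhdsWithin_le_nhds
  have hpos : 0 < ∑ i, ∑ j, c i * c j * (if i = j then (1 : ℝ) else 0) := by
    simp only [mul_ite, mul_one, mul_zero, Finset.sum_ite_eq, Finset.mem_univ, if_true]
    obtain ⟨i, hi⟩ := Function.ne_iff.1 hc
    exact Finset.sum_pos' (fun i _ => mul_self_nonneg _) ⟨i, Finset.mem_univ _,
      mul_self_pos.2 hi⟩
  filter_upwards [ht.eventually (lt_mem_nhds hpos), self_mem_nhdsWithin] with s h1 hs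
  have : ∑ i, ∑ j, c i * c j * (s * (s + M i j)⁻¹) = s * ∑ i, ∑ j, c i * c j * (s + M i j)⁻¹ := by
    simp only [Finset.mul_sum]
    exact Finset.sum_congr rfl fun i _ => Finset.sum_congr rfl fun j _ => by ring
  rw [this] at h1
  exact pos_of_mul_pos_right h1 (le_of_lt hs)

open MeasureTheory Filter Topology in
theorem aux_main {n : ℕ} (M : Fin n → Fin n → ℝ) (hs : ∀ i j, M i j = M j i)
    (hd : ∀ i, M i i = 0)
    (hM : ∀ c : Fin n → ℝ, ∑ k, c k = 0 → ∑ i, ∑ j, c i * c j * M i j ≤ 0)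
    (hp : ∀ i j, i ≠ j → 0 < M i j) (t : ℝ) (ht : t ∈ Set.Ioo (0 : ℝ) 1)
    (c : Fin n → ℝ) (hc : c ≠ 0) (hc0 : ∑ k, c k = 0) :
    ∑ i, ∑ j, c i * c j * M i j ^ t < 0 := by
  obtain ⟨o, -⟩ := Function.ne_iff.1 hc
  have h0 := aux_nonneg M hs hd hM
  set C := ∫ s in Set.Ioi 0, Real.rpowIntegrand₀₁ t s 1 with hC
  have hCpos : 0 < C := Real.integral_rpowIntegrand₀₁_one_pos ht
  let F : ℝ → ℝ := fun s => ∑ i, ∑ j, c i * c j * Real.rpowIntegrand₀₁ t s (M i j)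
  have hIntg : ∀ i j, IntegrableOn (fun s => c i * c j * Real.rpowIntegrand₀₁ t s (M i j))
      (Set.Ioi 0) := fun i j =>
    (Real.integrableOn_rpowIntegrand₀₁_Ioi ht (h0 i j)).const_mul _
  have hFint : IntegrableOn F (Set.Ioi 0) :=
    integrable_finsetSum _ fun i _ => integrable_finsetSum _ fun j _ => hIntg i j
  have hrep : ∑ i, ∑ j, c i * c j * M i j ^ t = C⁻¹ * ∫ s in Set.Ioi 0, F s := by
    simp only [F]
    rw [integral_finsetSum _ fun i _ => integrable_finsetSum _ fun j _ => hIntg i j]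
    rw [Finset.mul_sum]
    refine Finset.sum_congr rfl fun i _ => ?_
    rw [integral_finsetSum _ fun j _ => hIntg i j, Finset.mul_sum]
    refine Finset.sum_congr rfl fun j _ => ?_
    rw [integral_const_mul, Real.rpow_eq_const_mul_integral ht (h0 i j)]
    ring
  have hF : ∀ s, -F s = s ^ t * ∑ i, ∑ j, c i * c j * (s + M i j)⁻¹ := by
    intro s
    have h1 : ∑ i, ∑ j, c i * c j * s⁻¹ = 0 := by
      simp only [← Finset.sum_mul, ← Finset.mul_sum, hc0]; simp
    have h2 : F s = s ^ t * (∑ i, ∑ j, c i * c j * s⁻¹ -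
        ∑ i, ∑ j, c i * c j * (s + M i j)⁻¹) := by
      simp only [F, Real.rpowIntegrand₀₁, ← Finset.sum_sub_distrib, Finset.mul_sum]
      exact Finset.sum_congr rfl fun i _ => Finset.sum_congr rfl fun j _ => by ring
    rw [h2, h1]; ring
  have hpos : 0 < ∫ s in Set.Ioi 0, (-F) s := by
    rw [setIntegral_pos_iff_support_of_nonneg_ae _ hFint.neg]
    · obtain ⟨b, hb, hb2⟩ := mem_nhdsGT_iff_exists_Ioo_subset.1 (aux_ev M hd hp c hc)
      refine lt_of_lt_of_le ?_ (measure_mono (s := Set.Ioo 0 b) ?_)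
      · simpa using hb
      · intro s h
        refine ⟨?_, h.1⟩
        have h3 : 0 < -F s := by
          rw [hF]
          exact mul_pos (Real.rpow_pos_of_pos h.1 _) (hb2 h)
        exact h3.ne'
    · refine (ae_restrict_iff' measurableSet_Ioi).2 (Eventually.of_forall fun s h => ?_)
      change 0 ≤ -F s
      rw [hF]
      exact mul_nonneg (Real.rpow_nonneg (le_of_lt h) _) (aux_inv M hs hd hM o s h c)
  simp only [Pi.neg_apply] at hpos
  rw [integral_neg] at hpos
  rw [hrep]
  exact mul_neg_of_pos_of_neg (inv_pos.2 hCpos) (by linarith)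

/-- If `K` is a kernel of conditionally negative type vanishing only on the diagonal,
then for every `t ∈ (0,1)` the power `K^t` is strictly of conditionally negative type. -/
theorem pow_strictly_condNeg {X : Type*} (K : X → X → ℝ) (hK : IsCondNegKernel K)
    (hvan : ∀ x y : X, K x y = 0 → x = y) (t : ℝ) (ht : t ∈ Set.Ioo (0 : ℝ) 1) :
    ∀ (n : ℕ) (x : Fin n → X), Function.Injective x →
      ∀ lam : Fin n → ℝ, lam ≠ 0 → (∑ k, lam k) = 0 →
        (∑ i, ∑ j, lam i * lam j * K (x i) (x j) ^ t) < 0 := by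
  intro n x hx lam hlam hsum
  obtain ⟨hs, hd, hM⟩ := hK
  have h0 := aux_nonneg (fun i j => K (x i) (x j)) (fun i j => hs _ _) (fun i => hd _) (hM n x)
  exact aux_main (fun i j => K (x i) (x j)) (fun i j => hs _ _) (fun i => hd _) (hM n x)
    (fun i j hij => lt_of_le_of_ne (h0 i j) fun h => hij (hx (hvan _ _ h.symm))) t ht lam hlam hsum
end

section
/- Let X be a set and let K : X × X → ℝ be a kernel strictly of conditionally negative type. Then for every real Hilbert space H and every map f : X → H satisfying K(x,y) = ‖f(x) − f(y)‖² for all x,y ∈ X, the family (f(x))_{x∈X} is affinely independent over ℝ; in particular f is injective. -/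
/-- If `K` is strictly of conditionally negative type, then any map `f : X → H` into a
real Hilbert space realizing `K` as `K(x,y) = ‖f x − f y‖²` has affinely independent
image; in particular `f` is injective. -/
theorem affineIndependent_of_strictly_condNegKernel {X : Type*} (K : X → X → ℝ)
    (hK : IsCondNegKernel K)
    (hstrict : ∀ (n : ℕ) (x : Fin n → X), Function.Injective x →
      ∀ lam : Fin n → ℝ, lam ≠ 0 → (∑ k, lam k) = 0 →
        (∑ i, ∑ j, lam i * lam j * K (x i) (x j)) < 0)
    {H : Type*} [NormedAddCommGroup H] [InnerProductSpace ℝ H] [CompleteSpace H]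
    (f : X → H) (hf : ∀ x y, K x y = ‖f x - f y‖ ^ 2) :
    AffineIndependent ℝ f ∧ Function.Injective f := by
  have hA : AffineIndependent ℝ f := by
    rw [affineIndependent_iff]
    intro s w hw hs e he
    by_contra hne
    have key : ∀ g : X → ℝ, ∑ i, g (s.equivFin.symm i) = ∑ x ∈ s, g x := by
      intro g
      rw [← Finset.sum_coe_sort s g]
      exact Equiv.sum_comp s.equivFin.symm (fun x : s => g x)
    have h := hstrict s.card (fun i => (s.equivFin.symm i : X))
      (Subtype.val_injective.comp s.equivFin.symm.injective)
      (fun i => w (s.equivFin.symm i))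
      (fun h0 => hne (by simpa using congrFun h0 (s.equivFin ⟨e, he⟩)))
      (by rw [key w, hw])
    have h2 : ∀ x : X, ∑ j, w x * w (s.equivFin.symm j) * K x (s.equivFin.symm j)
        = ∑ y ∈ s, w x * w y * K x y := fun x => key (fun y => w x * w y * K x y)
    simp only [h2] at h
    rw [key (fun x => ∑ y ∈ s, w x * w y * K x y)] at h
    have h3 := inner_sum_smul_sum_smul_of_sum_eq_zero f hw f hw
    rw [hs, inner_zero_left] at h3
    simp only [hf, pow_two] at h
    linarith
  exact ⟨hA, hA.injective⟩
end

section
/- Let a⁻, a⁺, b⁻, b⁺ ∈ ℝ be pairwise distinct. For all sequences (x_n), (x'_n), (y_n), (y'_n) of points of the hyperbolic upper half-plane whose underlying complex numbers converge respectively to a⁻, a⁺, b⁻, b⁺, one has the convergence exp((1/2)·(dist(x_n,x'_n) + dist(y_n,y'_n) − dist(x_n,y'_n) − dist(y_n,x'_n))) → |(a⁺−a⁻)(b⁺−b⁻)| / |(a⁺−b⁻)(b⁺−a⁻)|. In other words, the cross-ratio of the hyperbolic plane extends continuously to quadruples of distinct boundary points, where it equals the modulus of the projective cross-ratio. -/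
open Filter

theorem tendsto_aux (a b : ℝ) (u v : ℕ → UpperHalfPlane)
    (hu : Tendsto (fun n => (u n : ℂ)) atTop (nhds (a : ℂ)))
    (hv : Tendsto (fun n => (v n : ℂ)) atTop (nhds (b : ℂ))) :
    Tendsto (fun n => Real.exp (dist (u n) (v n) / 2) * (√(u n).im * √(v n).im))
      atTop (nhds |a - b|) := by
  have hc : Tendsto (fun n => (starRingEnd ℂ) (v n : ℂ)) atTop (nhds (b : ℂ)) := by
    have := (Complex.continuous_conj.tendsto (b : ℂ)).comp hv
    rwa [Complex.conj_ofReal] at this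
  have h := ((hu.dist hv).add (hu.dist hc)).div_const 2
  have e : (dist (a : ℂ) b + dist (a : ℂ) b) / 2 = |a - b| := by
    rw [Complex.dist_eq, ← Complex.ofReal_sub, Complex.norm_real, Real.norm_eq_abs]
    ring
  rw [e] at h
  refine h.congr fun n => ?_
  have h1 : √(u n).im ≠ 0 := (Real.sqrt_pos.2 (u n).im_pos).ne'
  have h2 : √(v n).im ≠ 0 := (Real.sqrt_pos.2 (v n).im_pos).ne'
  rw [UpperHalfPlane.exp_half_dist, Real.sqrt_mul (u n).im_pos.le]
  field_simp

/-- The cross-ratio of the hyperbolic plane extends continuously to quadruples of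
pairwise distinct boundary points, where it equals the modulus of the projective
cross-ratio: if `xₙ → a⁻`, `x'ₙ → a⁺`, `yₙ → b⁻`, `y'ₙ → b⁺` in the closure of the upper
half-plane (with `a⁻, a⁺, b⁻, b⁺ ∈ ℝ` pairwise distinct), then
`exp(½(d(xₙ,x'ₙ)+d(yₙ,y'ₙ)−d(xₙ,y'ₙ)−d(yₙ,x'ₙ))) → |(a⁺−a⁻)(b⁺−b⁻)|/|(a⁺−b⁻)(b⁺−a⁻)|`. -/
theorem crossRatio_boundary_limit (aminus aplus bminus bplus : ℝ)
    (h₁ : aminus ≠ aplus) (h₂ : aminus ≠ bminus) (h₃ : aminus ≠ bplus)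
    (h₄ : aplus ≠ bminus) (h₅ : aplus ≠ bplus) (h₆ : bminus ≠ bplus)
    (x x' y y' : ℕ → UpperHalfPlane)
    (hx : Tendsto (fun n => (x n : ℂ)) atTop (nhds (aminus : ℂ)))
    (hx' : Tendsto (fun n => (x' n : ℂ)) atTop (nhds (aplus : ℂ)))
    (hy : Tendsto (fun n => (y n : ℂ)) atTop (nhds (bminus : ℂ)))
    (hy' : Tendsto (fun n => (y' n : ℂ)) atTop (nhds (bplus : ℂ))) :
    Tendsto (fun n => Real.exp ((1 / 2) *
        (dist (x n) (x' n) + dist (y n) (y' n)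
          - dist (x n) (y' n) - dist (y n) (x' n))))
      atTop
      (nhds (|(aplus - aminus) * (bplus - bminus)| /
        |(aplus - bminus) * (bplus - aminus)|)) := by
  have hne : |aminus - bplus| * |bminus - aplus| ≠ 0 :=
    mul_ne_zero (abs_ne_zero.2 (sub_ne_zero.2 h₃)) (abs_ne_zero.2 (sub_ne_zero.2 h₄.symm))
  have h := ((tendsto_aux _ _ _ _ hx hx').mul (tendsto_aux _ _ _ _ hy hy')).div
    ((tendsto_aux _ _ _ _ hx hy').mul (tendsto_aux _ _ _ _ hy hx')) hne
  have e : |aminus - aplus| * |bminus - bplus| / (|aminus - bplus| * |bminus - aplus|) =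
      |(aplus - aminus) * (bplus - bminus)| / |(aplus - bminus) * (bplus - aminus)| := by
    rw [abs_mul, abs_mul, abs_sub_comm aminus aplus, abs_sub_comm bminus bplus,
      abs_sub_comm aminus bplus, abs_sub_comm bminus aplus, mul_comm |bplus - aminus|]
  rw [e] at h
  refine h.congr fun n => ?_
  have g1 : √(x n).im ≠ 0 := (Real.sqrt_pos.2 (x n).im_pos).ne'
  have g2 : √(x' n).im ≠ 0 := (Real.sqrt_pos.2 (x' n).im_pos).ne'
  have g3 : √(y n).im ≠ 0 := (Real.sqrt_pos.2 (y n).im_pos).ne'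
  have g4 : √(y' n).im ≠ 0 := (Real.sqrt_pos.2 (y' n).im_pos).ne'
  have e2 : (1 / 2) * (dist (x n) (x' n) + dist (y n) (y' n)
          - dist (x n) (y' n) - dist (y n) (x' n)) =
      (dist (x n) (x' n) / 2 + dist (y n) (y' n) / 2)
        - (dist (x n) (y' n) / 2 + dist (y n) (x' n) / 2) := by ring
  simp only [Pi.div_apply]
  rw [e2, Real.exp_sub, Real.exp_add, Real.exp_add]
  have k1 := (Real.exp_pos (dist (x n) (y' n) / 2)).ne'
  have k2 := (Real.exp_pos (dist (y n) (x' n) / 2)).ne'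
  generalize Real.exp (dist (x n) (x' n) / 2) = A
  generalize Real.exp (dist (y n) (y' n) / 2) = B
  generalize Real.exp (dist (x n) (y' n) / 2) = C at *
  generalize Real.exp (dist (y n) (x' n) / 2) = D at *
  field_simp
end

section
/- Let K be a field with a complete, non-trivial, non-Archimedean multiplicative absolute value |·| (so |x+y| ≤ max(|x|,|y|)). Let G = SL₂(K), topologized by entrywise convergence of matrices. Let B ⊆ G be norm-bounded, i.e., there is M ≥ 0 with |g_{ij}| ≤ M for every g ∈ B and all entries g_{ij}. Then B is coarsely bounded: for every metric space (X,d) on which G acts continuously by isometries and every point x ∈ X, the orbit set {g·x : g ∈ B} is a bounded subset of X. -/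
/-- `SL₂(K)` carries the topology of entrywise convergence of matrices. -/
instance sl2TopologicalSpace {K : Type*} [NormedField K] :
    TopologicalSpace (Matrix.SpecialLinearGroup (Fin 2) K) :=
  TopologicalSpace.induced (fun g => (g : Matrix (Fin 2) (Fin 2) K)) inferInstance

open Matrix in
/-- Upper unipotent matrix. -/
def sl2Upper {K : Type*} [NormedField K] (t : K) : Matrix.SpecialLinearGroup (Fin 2) K :=
  ⟨!![1, t; 0, 1], by simp [Matrix.det_fin_two]⟩

open Matrix in
/-- Lower unipotent matrix. -/
def sl2Lower {K : Type*} [NormedField K] (t : K) : Matrix.SpecialLinearGroup (Fin 2) K :=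
  ⟨!![1, 0; t, 1], by simp [Matrix.det_fin_two]⟩

open Matrix in
/-- Diagonal matrix. -/
def sl2Diag {K : Type*} [NormedField K] (a : K) (ha : a ≠ 0) :
    Matrix.SpecialLinearGroup (Fin 2) K :=
  ⟨!![a, 0; 0, a⁻¹], by simp [Matrix.det_fin_two, ha]⟩

lemma sl2_mul_apply {K : Type*} [NormedField K] (g h : Matrix.SpecialLinearGroup (Fin 2) K)
    (i j : Fin 2) : (g * h).1 i j = g.1 i 0 * h.1 0 j + g.1 i 1 * h.1 1 j := by
  change (g.1 * h.1) i j = _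
  rw [Matrix.mul_apply, Fin.sum_univ_two]

lemma continuous_sl2Upper {K : Type*} [NormedField K] :
    Continuous (sl2Upper : K → Matrix.SpecialLinearGroup (Fin 2) K) := by
  refine continuous_induced_rng.2 ?_
  refine continuous_matrix fun i j => ?_
  fin_cases i <;> fin_cases j <;> simp [sl2Upper] <;> fun_prop

lemma continuous_sl2Lower {K : Type*} [NormedField K] :
    Continuous (sl2Lower : K → Matrix.SpecialLinearGroup (Fin 2) K) := by
  refine continuous_induced_rng.2 ?_
  refine continuous_matrix fun i j => ?_
  fin_cases i <;> fin_cases j <;> simp [sl2Lower] <;> fun_prop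

lemma sl2Upper_conj {K : Type*} [NormedField K] (a : K) (ha : a ≠ 0) (s : K) :
    sl2Upper (a ^ 2 * s) * sl2Diag a ha = sl2Diag a ha * sl2Upper s := by
  ext i j
  simp only [sl2_mul_apply]
  fin_cases i <;> fin_cases j <;>
    simp [sl2Upper, sl2Diag]
  field_simp

lemma sl2Lower_conj {K : Type*} [NormedField K] (a : K) (ha : a ≠ 0) (s : K) :
    sl2Lower (a ^ 2 * s) * sl2Diag a⁻¹ (inv_ne_zero ha) =
      sl2Diag a⁻¹ (inv_ne_zero ha) * sl2Lower s := by
  ext i j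
  simp only [sl2_mul_apply]
  fin_cases i <;> fin_cases j <;>
    simp [sl2Lower, sl2Diag]
  field_simp

lemma sl2_factor {K : Type*} [NormedField K] (g : Matrix.SpecialLinearGroup (Fin 2) K)
    (hc : g.1 1 0 ≠ 0) :
    g = sl2Upper ((g.1 0 0 - 1) / g.1 1 0) *
      (sl2Lower (g.1 1 0) * sl2Upper ((g.1 1 1 - 1) / g.1 1 0)) := by
  have hdet : g.1 0 0 * g.1 1 1 - g.1 0 1 * g.1 1 0 = 1 := by
    rw [← Matrix.det_fin_two]; exact g.2
  ext i j
  simp only [sl2_mul_apply]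
  fin_cases i <;> fin_cases j <;>
    simp [sl2Lower, sl2Upper] <;> field_simp <;>
    first | ring1 | linear_combination -hdet

lemma dist_mul_smul_le' {G X : Type*} [Group G] [MetricSpace X] [MulAction G X]
    (hiso : ∀ g : G, Isometry fun x : X => g • x) (x : X) (g h : G) :
    dist ((g * h) • x) x ≤ dist (g • x) x + dist (h • x) x := by
  have h1 := (hiso g).dist_eq (h • x) x
  have h2 := dist_triangle ((g * h) • x) (g • x) x
  simp only [mul_smul] at *
  linarith

lemma unipotent_bounded {K G X : Type*} [NormedField K]
    (hnt : ∃ x : K, x ≠ 0 ∧ ‖x‖ ≠ 1) [Group G] [TopologicalSpace G] [MetricSpace X]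
    [MulAction G X] (hiso : ∀ g : G, Isometry fun x : X => g • x)
    (hcont : Continuous fun p : G × X => p.1 • p.2) (x : X)
    (f : K → G) (hf : Continuous f) (h0 : f 0 = 1)
    (hconj : ∀ a : K, a ≠ 0 → ∃ h : G, ∀ s, f (a ^ 2 * s) * h = h * f s) (R : ℝ) :
    ∃ C : ℝ, ∀ t : K, ‖t‖ ≤ R → dist (f t • x) x ≤ C := by
  have hc : Continuous fun t : K => dist (f t • x) x := by
    have : Continuous fun t : K => f t • x := hcont.comp (hf.prodMk continuous_const)
    exact this.dist continuous_const
  obtain ⟨ε, hε, H⟩ := Metric.continuous_iff.1 hc 0 1 one_pos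
  obtain ⟨b, hb⟩ : ∃ b : K, 1 < ‖b‖ := by
    obtain ⟨y, hy, hy1⟩ := hnt
    rcases lt_or_gt_of_ne hy1 with h | h
    · exact ⟨y⁻¹, by rw [norm_inv]; exact (one_lt_inv₀ (norm_pos_iff.2 hy)).2 h⟩
    · exact ⟨y, h⟩
  obtain ⟨n, hn⟩ := pow_unbounded_of_one_lt (R / ε) hb
  have hb0 : b ≠ 0 := norm_pos_iff.1 (by linarith)
  have ha : b ^ n ≠ 0 := pow_ne_zero _ hb0
  obtain ⟨h, hh⟩ := hconj _ ha
  refine ⟨dist (h • x) x + 1 + dist (h⁻¹ • x) x, fun t ht => ?_⟩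
  have e := hh (t / (b ^ n) ^ 2)
  rw [mul_div_cancel₀ _ (pow_ne_zero 2 ha)] at e
  have e' : f t = h * f (t / (b ^ n) ^ 2) * h⁻¹ := by rw [← e]; simp
  have hsmall : ‖t / (b ^ n) ^ 2‖ < ε := by
    have h1 : 1 ≤ ‖b‖ ^ n := one_le_pow₀ hb.le
    rw [norm_div, norm_pow, norm_pow, div_lt_iff₀ (by positivity)]
    rw [div_lt_iff₀ hε] at hn
    nlinarith [mul_le_mul_of_nonneg_left h1 (by positivity : 0 ≤ ε * ‖b‖ ^ n)]
  have h3 := H (t / (b ^ n) ^ 2) (by simpa using hsmall)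
  simp only [h0, one_smul, dist_self, Real.dist_eq, sub_zero] at h3
  have h4 := (abs_lt.1 h3).2
  rw [e']
  have h5 := dist_mul_smul_le' hiso x (h * f (t / (b ^ n) ^ 2)) h⁻¹
  have h6 := dist_mul_smul_le' hiso x h (f (t / (b ^ n) ^ 2))
  linarith

/-- Let `K` be a field with a complete, non-trivial, non-Archimedean absolute value.
Every norm-bounded subset `B` of `SL₂(K)` is coarsely bounded: for every metric space
`X` on which `SL₂(K)` acts continuously by isometries and every `x ∈ X`, the orbit set
`{g • x : g ∈ B}` is bounded. -/
theorem normBounded_coarselyBounded_SL2 {K : Type*} [NormedField K] [CompleteSpace K]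
    (hna : ∀ x y : K, ‖x + y‖ ≤ max ‖x‖ ‖y‖)
    (hnt : ∃ x : K, x ≠ 0 ∧ ‖x‖ ≠ 1)
    (B : Set (Matrix.SpecialLinearGroup (Fin 2) K))
    (M : ℝ) (hM : 0 ≤ M)
    (hB : ∀ g ∈ B, ∀ i j : Fin 2, ‖(g : Matrix (Fin 2) (Fin 2) K) i j‖ ≤ M)
    (X : Type*) [MetricSpace X] [MulAction (Matrix.SpecialLinearGroup (Fin 2) K) X]
    (hiso : ∀ g : Matrix.SpecialLinearGroup (Fin 2) K, Isometry fun x : X => g • x)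
    (hcont : Continuous fun p : Matrix.SpecialLinearGroup (Fin 2) K × X => p.1 • p.2)
    (x : X) :
    Bornology.IsBounded ((fun g : Matrix.SpecialLinearGroup (Fin 2) K => g • x) '' B) := by
  have h0u : sl2Upper (0 : K) = 1 := by
    ext i j
    fin_cases i <;> fin_cases j <;> simp [sl2Upper]
  have h0l : sl2Lower (0 : K) = 1 := by
    ext i j
    fin_cases i <;> fin_cases j <;> simp [sl2Lower]
  have HU := unipotent_bounded hnt hiso hcont x sl2Upper continuous_sl2Upper h0u
    (fun a ha => ⟨_, sl2Upper_conj a ha⟩)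
  have HL := unipotent_bounded hnt hiso hcont x sl2Lower continuous_sl2Lower h0l
    (fun a ha => ⟨_, sl2Lower_conj a ha⟩)
  -- elements with lower-left entry bounded below
  have key : ∀ N δ : ℝ, 0 < δ → ∃ C : ℝ, ∀ g : Matrix.SpecialLinearGroup (Fin 2) K,
      (∀ i j, ‖g.1 i j‖ ≤ N) → δ ≤ ‖g.1 1 0‖ → dist (g • x) x ≤ C := by
    intro N δ hδ
    obtain ⟨C1, hC1⟩ := HU ((N + 1) / δ)
    obtain ⟨C2, hC2⟩ := HL N
    refine ⟨C1 + (C2 + C1), fun g hg hgd => ?_⟩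
    have hc : g.1 1 0 ≠ 0 := norm_pos_iff.1 (by linarith)
    have hq : ∀ i, ‖(g.1 i i - 1) / g.1 1 0‖ ≤ (N + 1) / δ := by
      intro i
      rw [norm_div]
      have h1 : ‖g.1 i i - 1‖ ≤ N + 1 := by
        have := norm_sub_le (g.1 i i) 1
        have := hg i i
        rw [norm_one] at *
        linarith
      have h2 : 0 ≤ N + 1 := (norm_nonneg _).trans h1
      exact div_le_div₀ h2 h1 hδ hgd
    rw [sl2_factor g hc]
    refine (dist_mul_smul_le' hiso x _ _).trans (add_le_add (hC1 _ (hq 0)) ?_)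
    exact (dist_mul_smul_le' hiso x _ _).trans (add_le_add (hC2 _ (hg 1 0)) (hC1 _ (hq 1)))
  have hN : 0 < M + 1 := by linarith
  set δ : ℝ := 1 / (3 * (M + 1)) with hδdef
  have hδ : 0 < δ := by positivity
  have hδM : 3 * δ * (M + 1) = 1 := by rw [hδdef]; field_simp
  obtain ⟨C, hC⟩ := key (2 * M) δ hδ
  have main : ∀ g ∈ B, dist (g • x) x ≤ dist ((sl2Lower (1 : K))⁻¹ • x) x + C := by
    intro g hg
    have hb := hB g hg
    by_cases hcase : δ ≤ ‖g.1 1 0‖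
    · have := hC g (fun i j => (hb i j).trans (by linarith)) hcase
      linarith [dist_nonneg (x := (sl2Lower (1 : K))⁻¹ • x) (y := x)]
    · have hdet : g.1 0 0 * g.1 1 1 - g.1 0 1 * g.1 1 0 = 1 := by
        rw [← Matrix.det_fin_two]; exact g.2
      have h1 : 1 ≤ ‖g.1 0 0‖ * ‖g.1 1 1‖ + ‖g.1 0 1‖ * ‖g.1 1 0‖ := by
        have := norm_sub_le (g.1 0 0 * g.1 1 1) (g.1 0 1 * g.1 1 0)
        rw [hdet, norm_one, norm_mul, norm_mul] at this
        exact this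
      have h2 : 2 * δ ≤ ‖g.1 0 0‖ := by
        have i1 : ‖g.1 0 0‖ * ‖g.1 1 1‖ ≤ ‖g.1 0 0‖ * (M + 1) :=
          mul_le_mul_of_nonneg_left ((hb 1 1).trans (by linarith)) (norm_nonneg _)
        have i2 : ‖g.1 0 1‖ * ‖g.1 1 0‖ ≤ (M + 1) * δ :=
          mul_le_mul ((hb 0 1).trans (by linarith)) (not_le.1 hcase).le (norm_nonneg _) hN.le
        have i3 : (2 * δ) * (M + 1) ≤ ‖g.1 0 0‖ * (M + 1) := by linarith
        exact le_of_mul_le_mul_right i3 hN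
      have r0 : ∀ j, (sl2Lower (1 : K) * g).1 0 j = g.1 0 j := by
        intro j; simp only [sl2_mul_apply]; simp [sl2Lower]
      have r1 : ∀ j, (sl2Lower (1 : K) * g).1 1 j = g.1 0 j + g.1 1 j := by
        intro j; simp only [sl2_mul_apply]; simp [sl2Lower]
      have h3 := hC (sl2Lower (1 : K) * g) (by
        intro i j
        match i with
        | 0 => rw [r0]; exact (hb 0 j).trans (by linarith)
        | 1 =>
          rw [r1]
          have := norm_add_le (g.1 0 j) (g.1 1 j)
          have := hb 0 j
          have := hb 1 j
          linarith) (by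
        rw [r1]
        have h4 := norm_sub_le (g.1 0 0 + g.1 1 0) (g.1 1 0)
        rw [add_sub_cancel_right] at h4
        have := not_le.1 hcase
        linarith)
      have h5 := dist_mul_smul_le' hiso x (sl2Lower (1 : K))⁻¹ (sl2Lower (1 : K) * g)
      rw [inv_mul_cancel_left] at h5
      linarith
  refine (Metric.isBounded_iff_subset_closedBall x).2 ⟨dist ((sl2Lower (1 : K))⁻¹ • x) x + C, ?_⟩
  rintro _ ⟨g, hg, rfl⟩
  exact Metric.mem_closedBall.2 (main g hg)
end
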